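/- For every Λ > 0 there exists a constant C > 0, depending only on φ and Λ, with the following property. Let r > 0 and let x₁, x₂ ∈ ℝ⁴ with |x₁−x₂| ≤ r/4; suppose u is harmonic on an open set containing the closed ball B̄_{x₁}(6r); suppose that for i = 1,2 one has H_φ(x_i,t) > 0 and N_φ(x_i,t) ≤ Λ for all t ∈ (0, 4r]; and suppose H_φ(x',r) > 0 for every x' on the segment from x₁ to x₂. Then |N_φ(x₁,r) − N_φ(x₂,r)| ≤ C·(√(W_{r/4}^{4r}(x₁)) + √(W_{r/4}^{4r}(x₂))). -/

import Mathlib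

open Metric MeasureTheory
open scoped RealInnerProductSpace

noncomputable section

abbrev E4 := EuclideanSpace ℝ (Fin 4)

variable {E : Type*} [NormedAddCommGroup E] [InnerProductSpace ℝ E] [FiniteDimensional ℝ E]

/-- `u` is smooth and harmonic (the Laplacian, i.e. the sum of the pure second
derivatives in the coordinate directions, vanishes) on `Ω`. -/
def IsHarmonicOn (u : E4 → E) (Ω : Set E4) : Prop :=
  ContDiffOn ℝ (⊤ : ℕ∞) u Ω ∧
  ∀ x ∈ Ω, ∑ i : Fin 4,
    iteratedFDeriv ℝ 2 u x ![EuclideanSpace.single i (1:ℝ), EuclideanSpace.single i 1] = 0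

/-- `|∇u(y)|²`, the squared Frobenius norm of the derivative of `u` at `y`. -/
def gradSq (u : E4 → E) (y : E4) : ℝ :=
  ∑ i : Fin 4, ‖fderiv ℝ u y (EuclideanSpace.single i (1:ℝ))‖ ^ 2

/-- `D_φ(x,r) = ∫ |∇u(y)|² φ(|y−x|/r) dy`. -/
def Dphi (φ : ℝ → ℝ) (u : E4 → E) (x : E4) (r : ℝ) : ℝ :=
  ∫ y, gradSq u y * φ (‖y - x‖ / r)

/-- `H_φ(x,r) = −∫ |u(y)|² |y−x|⁻¹ φ'(|y−x|/r) dy`. -/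
def Hphi (φ : ℝ → ℝ) (u : E4 → E) (x : E4) (r : ℝ) : ℝ :=
  -∫ y, ‖u y‖ ^ 2 * ‖y - x‖⁻¹ * deriv φ (‖y - x‖ / r)

/-- `E_φ(x,r) = −∫ |∂_{ν_x}u(y)|² |y−x| φ'(|y−x|/r) dy`, where `ν_x(y) = (y−x)/|y−x|`. -/
def Ephi (φ : ℝ → ℝ) (u : E4 → E) (x : E4) (r : ℝ) : ℝ :=
  -∫ y, ‖fderiv ℝ u y (‖y - x‖⁻¹ • (y - x))‖ ^ 2 * ‖y - x‖ * deriv φ (‖y - x‖ / r)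

/-- The smoothed frequency `N_φ(x,r) = r D_φ(x,r) / H_φ(x,r)`. -/
def Nphi (φ : ℝ → ℝ) (u : E4 → E) (x : E4) (r : ℝ) : ℝ :=
  r * Dphi φ u x r / Hphi φ u x r

/-!
On the shell around `x` of radius `t` the frequency `N(x, t)` is the degree `a` for which
`∂_{η_x} u - a u` is smallest in `L²`, and `∂_t N(x, t)` is a multiple of the squared size of this
minimal defect. A small increase of the frequency between `2r` and `4r` therefore makes `u` nearly
homogeneous about `x` on some shell of radius `τ ∈ (2r, 4r)`. The defect is again harmonic, so
integrals over shells dominate integrals over balls, and the estimate passes from that shell to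
every shell of radius `r` whose centre is within `r / 4` of `x`; the height at `τ` is controlled by
the height at `r` by doubling.

The derivative of `N(·, r)` in the direction `x₂ - x₁` pairs `∂_{x₂ - x₁} u` with the minimal defect
at the moving centre. This defect is orthogonal to `u`, and modulo `u` the field `∂_{x₂ - x₁} u` is
the difference of the defects at `x₁` and `x₂`, while the minimal defect itself is at most their
convex combination. So the derivative is quadratic in the defects and is bounded by the sum of the
two pinchings `W(x₁) + W(x₂)` themselves; since `0 ≤ W ≤ Λ`, this is stronger than the bound by
their square roots.
-/

open scoped Laplacian

/-! ### Radial derivatives and the Laplacian -/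

section RadialDerivative

variable {V F : Type*} [NormedAddCommGroup V] [NormedSpace ℝ V]
  [NormedAddCommGroup F] [NormedSpace ℝ F] {u : V → F}

/-- The derivative `∂_{η_x} u` along the position field `η_x(y) = y - x`. -/
def radialDeriv (x : V) (u : V → F) (y : V) : F := fderiv ℝ u y (y - x)

/-- `∂_{η_x} u - a u`, which vanishes identically iff `u` is homogeneous of degree `a` about `x`
(Euler's identity). -/
def homogeneityDefect (x : V) (a : ℝ) (u : V → F) (y : V) : F := radialDeriv x u y - a • u y

lemma fderiv_apply_sub_eq_homogeneityDefect_sub (u : V → F) (x₁ x₂ : V) (a₁ a₂ : ℝ) :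
    (fun y => fderiv ℝ u y (x₂ - x₁))
      = homogeneityDefect x₁ a₁ u - homogeneityDefect x₂ a₂ u - (a₂ - a₁) • u := by
  ext y
  simp only [homogeneityDefect, radialDeriv, Pi.sub_apply, Pi.smul_apply, map_sub]
  module

lemma homogeneityDefect_convexCombination (u : V → F) (x₁ x₂ : V) (a₁ a₂ s : ℝ) :
    homogeneityDefect (x₁ + s • (x₂ - x₁)) ((1 - s) * a₁ + s * a₂) u
      = (1 - s) • homogeneityDefect x₁ a₁ u + s • homogeneityDefect x₂ a₂ u := by
  ext y
  simp only [homogeneityDefect, radialDeriv, Pi.add_apply, Pi.smul_apply, map_sub, map_add,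
    map_smul]
  module

lemma contDiff_fderiv_apply {m n : WithTop ℕ∞} (hu : ContDiff ℝ n u) (hmn : m + 1 ≤ n) (v : V) :
    ContDiff ℝ m fun y => fderiv ℝ u y v :=
  (hu.fderiv_right hmn).clm_apply contDiff_const

lemma contDiff_radialDeriv {m n : WithTop ℕ∞} (hu : ContDiff ℝ n u) (hmn : m + 1 ≤ n) (x : V) :
    ContDiff ℝ m (radialDeriv x u) :=
  (hu.fderiv_right hmn).clm_apply (contDiff_id.sub contDiff_const)

lemma contDiff_homogeneityDefect {m n : WithTop ℕ∞} (hu : ContDiff ℝ n u) (hmn : m + 1 ≤ n)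
    (x : V) (a : ℝ) : ContDiff ℝ m (homogeneityDefect x a u) :=
  (contDiff_radialDeriv hu hmn x).sub ((hu.of_le (le_self_add.trans hmn)).const_smul a)

lemma fderiv_fderiv_apply (hu : ContDiff ℝ 2 u) (y v w : V) :
    fderiv ℝ (fun z => fderiv ℝ u z v) y w = fderiv ℝ (fderiv ℝ u) y w v := by
  have hdu : DifferentiableAt ℝ (fderiv ℝ u) y :=
    (hu.fderiv_right (m := 1) (by norm_num)).differentiable one_ne_zero y
  simp [fderiv_clm_apply hdu (differentiableAt_const v)]

lemma fderiv_radialDeriv (hu : ContDiff ℝ 2 u) (x y v : V) :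
    fderiv ℝ (radialDeriv x u) y v
      = fderiv ℝ u y v + radialDeriv x (fun z => fderiv ℝ u z v) y := by
  have hdu : DifferentiableAt ℝ (fderiv ℝ u) y :=
    (hu.fderiv_right (m := 1) (by norm_num)).differentiable one_ne_zero y
  have hsymm : IsSymmSndFDerivAt ℝ u y := hu.contDiffAt.isSymmSndFDerivAt (by simp)
  unfold radialDeriv
  rw [fderiv_clm_apply hdu (differentiableAt_fun_id.sub_const x), fderiv_fderiv_apply hu,
    hsymm.eq (y - x) v]
  simp [fderiv_sub_const]

end RadialDerivative

section Laplacian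

variable {V F ι : Type*} [NormedAddCommGroup V] [InnerProductSpace ℝ V] [FiniteDimensional ℝ V]
  [NormedAddCommGroup F] [NormedSpace ℝ F] [Fintype ι] {u : V → F}

lemma laplacian_eq_sum_fderiv_fderiv (b : OrthonormalBasis ι ℝ V) (hu : ContDiff ℝ 2 u) (y : V) :
    Δ u y = ∑ i, fderiv ℝ (fun z => fderiv ℝ u z (b i)) y (b i) := by
  rw [InnerProductSpace.laplacian_eq_iteratedFDeriv_orthonormalBasis u b]
  simp [iteratedFDeriv_two_apply, fderiv_fderiv_apply hu]

lemma laplacian_radialDeriv (hu : ContDiff ℝ 3 u) (x y : V) :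
    Δ (radialDeriv x u) y = (2 : ℝ) • Δ u y + radialDeriv x (Δ u) y := by
  let e := stdOrthonormalBasis ℝ V
  have hu2 : ContDiff ℝ 2 u := hu.of_le (by norm_num)
  have hdu (v : V) : ContDiff ℝ 2 fun z => fderiv ℝ u z v :=
    contDiff_fderiv_apply hu (by norm_num) v
  have hddu (v : V) : ContDiff ℝ 1 fun z => fderiv ℝ (fun z => fderiv ℝ u z v) z v :=
    contDiff_fderiv_apply (hdu v) (by norm_num) v
  have first (v : V) : (fun z => fderiv ℝ (radialDeriv x u) z v)
      = fun z => fderiv ℝ u z v + radialDeriv x (fun z => fderiv ℝ u z v) z :=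
    funext fun z => fderiv_radialDeriv hu2 x z v
  have second (v : V) : fderiv ℝ (fun z => fderiv ℝ (radialDeriv x u) z v) y v
      = (2 : ℝ) • fderiv ℝ (fun z => fderiv ℝ u z v) y v
        + radialDeriv x (fun z => fderiv ℝ (fun z => fderiv ℝ u z v) z v) y := by
    rw [first, fderiv_fun_add ((hdu v).differentiable two_ne_zero y)
      ((contDiff_radialDeriv (hdu v) (m := 1) (by norm_num) x).differentiable one_ne_zero y),
      add_apply, fderiv_radialDeriv (hdu v), two_smul]
    abel
  have hlap : Δ u = fun z => ∑ i, fderiv ℝ (fun z => fderiv ℝ u z (e i)) z (e i) :=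
    funext (laplacian_eq_sum_fderiv_fderiv e hu2)
  rw [laplacian_eq_sum_fderiv_fderiv e (contDiff_radialDeriv hu (by norm_num) x), hlap]
  simp only [second, Finset.sum_add_distrib, Finset.smul_sum, radialDeriv]
  rw [fderiv_fun_sum fun i _ => (hddu (e i)).differentiable one_ne_zero y]
  simp

lemma laplacian_homogeneityDefect_eq_zero (hu : ContDiff ℝ 3 u) {s : Set V} (hs : IsOpen s)
    (hΔ : ∀ y ∈ s, Δ u y = 0) (x : V) (a : ℝ) {y : V} (hy : y ∈ s) :
    Δ (homogeneityDefect x a u) y = 0 := by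
  have hu2 : ContDiffAt ℝ 2 u y := (hu.of_le (by norm_num)).contDiffAt
  have hΔy : fderiv ℝ (Δ u) y = 0 := by
    rw [(Filter.eventuallyEq_of_mem (hs.mem_nhds hy) hΔ : Δ u =ᶠ[nhds y] fun _ => 0).fderiv_eq]
    simp
  change Δ (radialDeriv x u - a • u) y = 0
  rw [((contDiff_radialDeriv hu (by norm_num) x).contDiffAt).laplacian_sub (f₂ := a • u)
      (hu2.const_smul a),
    InnerProductSpace.laplacian_smul a hu2, laplacian_radialDeriv hu, radialDeriv, hΔy, hΔ y hy]
  simp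

end Laplacian

lemma fderiv_inner_self {V F : Type*} [NormedAddCommGroup V] [NormedSpace ℝ V]
    [NormedAddCommGroup F] [InnerProductSpace ℝ F] {u : V → F} {y : V}
    (hu : DifferentiableAt ℝ u y) (v : V) :
    fderiv ℝ (fun z => ⟪u z, u z⟫) y v = 2 * ⟪u y, fderiv ℝ u y v⟫ := by
  rw [fderiv_inner_apply ℝ hu hu, real_inner_comm, two_mul]

section GradientPairing

variable {V F ι : Type*} [NormedAddCommGroup V] [InnerProductSpace ℝ V] [FiniteDimensional ℝ V]
  [NormedAddCommGroup F] [InnerProductSpace ℝ F] [Fintype ι] {u h : V → F}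

/-- The pointwise Hilbert-Schmidt pairing `⟨∇h, ∇u⟩` of the derivatives, so that
`gradInner u u = |∇u|²`. -/
def gradInner (h u : V → F) (y : V) : ℝ :=
  ∑ i, ⟪fderiv ℝ h y (stdOrthonormalBasis ℝ V i), fderiv ℝ u y (stdOrthonormalBasis ℝ V i)⟫

lemma gradInner_eq_sum (b : OrthonormalBasis ι ℝ V) (h u : V → F) (y : V) :
    gradInner h u y = ∑ i, ⟪fderiv ℝ h y (b i), fderiv ℝ u y (b i)⟫ := by
  have canonical := (InnerProductSpace.canonicalCovariantTensor_eq_sum V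
    (stdOrthonormalBasis ℝ V)).symm.trans (InnerProductSpace.canonicalCovariantTensor_eq_sum V b)
  simpa [gradInner] using congrArg (TensorProduct.lift
    ((innerₗ F).compl₁₂ (fderiv ℝ h y).toLinearMap (fderiv ℝ u y).toLinearMap)) canonical

lemma gradInner_self_nonneg (u : V → F) (y : V) : 0 ≤ gradInner u u y :=
  Finset.sum_nonneg fun _ _ => real_inner_self_nonneg

lemma continuous_gradInner (hh : ContDiff ℝ 1 h) (hu : ContDiff ℝ 1 u) :
    Continuous (gradInner h u) :=
  continuous_finsetSum _ fun _ _ =>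
    ((contDiff_fderiv_apply hh (zero_add 1).le _).inner ℝ
      (contDiff_fderiv_apply hu (zero_add 1).le _)).continuous (n := 0)

lemma contDiff_gradInner_self (hu : ContDiff ℝ 2 u) : ContDiff ℝ 1 (gradInner u u) :=
  ContDiff.sum fun _ _ => (contDiff_fderiv_apply hu (by norm_num) _).inner ℝ
    (contDiff_fderiv_apply hu (by norm_num) _)

lemma fderiv_gradInner_self (hu : ContDiff ℝ 2 u) (y v : V) :
    fderiv ℝ (gradInner u u) y v = 2 * gradInner (fun z => fderiv ℝ u z v) u y := by
  have hdu (w : V) : DifferentiableAt ℝ (fun z => fderiv ℝ u z w) y :=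
    (contDiff_fderiv_apply hu (m := 1) (by norm_num) w).differentiable one_ne_zero y
  have hsymm : IsSymmSndFDerivAt ℝ u y := hu.contDiffAt.isSymmSndFDerivAt (by simp)
  unfold gradInner
  rw [fderiv_fun_sum fun i _ => (hdu _).inner ℝ (hdu _), _root_.sum_apply, Finset.mul_sum]
  refine Finset.sum_congr rfl fun i _ => ?_
  rw [fderiv_inner_apply ℝ (hdu _) (hdu _), fderiv_fderiv_apply hu, fderiv_fderiv_apply hu,
    hsymm.eq v, real_inner_comm, two_mul]

lemma gradInner_radialDeriv_left (hu : ContDiff ℝ 2 u) (x y : V) :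
    gradInner (radialDeriv x u) u y
      = gradInner u u y + gradInner (fun z => fderiv ℝ u z (y - x)) u y := by
  have hsymm : IsSymmSndFDerivAt ℝ u y := hu.contDiffAt.isSymmSndFDerivAt (by simp)
  rw [gradInner, gradInner, gradInner, ← Finset.sum_add_distrib]
  refine Finset.sum_congr rfl fun i _ => ?_
  rw [fderiv_radialDeriv hu, radialDeriv, inner_add_left, fderiv_fderiv_apply hu,
    fderiv_fderiv_apply hu, hsymm.eq (y - x)]

end GradientPairing

/-! ### Integration by parts against a compactly supported weight -/

lemma integrable_mul_of_hasCompactSupport {X : Type*} [TopologicalSpace X] [MeasurableSpace X]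
    [OpensMeasurableSpace X] {μ : Measure X} [IsFiniteMeasureOnCompacts μ] {K f : X → ℝ}
    (hK : Continuous K) (hKc : HasCompactSupport K) (hf : Continuous f) :
    Integrable (fun y => K y * f y) μ :=
  (hK.mul hf).integrable_of_hasCompactSupport hKc.mul_right

section IntegrationByParts

variable {V F ι : Type*} [NormedAddCommGroup V] [InnerProductSpace ℝ V] [FiniteDimensional ℝ V]
  [MeasurableSpace V] [BorelSpace V] [NormedAddCommGroup F] [InnerProductSpace ℝ F] [Fintype ι]
  {Ψ : V → ℝ} {G : V → V}

lemma integral_mul_fderiv_eq_neg_integral_mul_inner (hΨ : ∀ y, HasGradientAt Ψ (G y) y)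
    (hG : Continuous G) (hΨc : HasCompactSupport Ψ) {g : V → ℝ} (hg : ContDiff ℝ 1 g) (v : V) :
    ∫ y, Ψ y * fderiv ℝ g y v = -∫ y, g y * ⟪G y, v⟫ := by
  have hΨ' (y : V) : fderiv ℝ Ψ y v = ⟪G y, v⟫ := by simp [(hΨ y).hasFDerivAt.fderiv]
  have hΨ'c : HasCompactSupport fun y => ⟪G y, v⟫ := by
    simpa only [hΨ'] using hΨc.fderiv_apply (𝕜 := ℝ) v
  have hΨcont : Continuous Ψ :=
    continuous_iff_continuousAt.2 fun y => (hΨ y).hasFDerivAt.continuousAt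
  have hG' : Continuous fun y => ⟪G y, v⟫ := hG.inner continuous_const
  rw [integral_mul_fderiv_eq_neg_fderiv_mul_of_integrable]
  · simp only [hΨ', mul_comm]
  · simpa only [hΨ'] using integrable_mul_of_hasCompactSupport hG' hΨ'c hg.continuous
  · exact integrable_mul_of_hasCompactSupport hΨcont hΨc
      (contDiff_fderiv_apply hg (zero_add 1).le v).continuous
  · exact integrable_mul_of_hasCompactSupport hΨcont hΨc hg.continuous
  · exact fun y _ => (hΨ y).hasFDerivAt.differentiableAt
  · exact fun y _ => hg.differentiable one_ne_zero y

lemma integral_mul_sum_fderiv_eq_neg (b : OrthonormalBasis ι ℝ V)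
    (hΨ : ∀ y, HasGradientAt Ψ (G y) y) (hG : Continuous G) (hΨc : HasCompactSupport Ψ)
    {g : ι → V → ℝ} (hg : ∀ i, ContDiff ℝ 1 (g i)) :
    ∫ y, Ψ y * ∑ i, fderiv ℝ (g i) y (b i) = -∫ y, ∑ i, g i y * ⟪G y, b i⟫ := by
  have hΨcont : Continuous Ψ :=
    continuous_iff_continuousAt.2 fun y => (hΨ y).hasFDerivAt.continuousAt
  have hΨ'c (i : ι) : HasCompactSupport fun y => ⟪G y, b i⟫ := by
    simpa [(hΨ _).hasFDerivAt.fderiv] using hΨc.fderiv_apply (𝕜 := ℝ) (b i)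
  simp only [Finset.mul_sum, mul_comm (g _ _)]
  rw [integral_finsetSum _ fun i _ => integrable_mul_of_hasCompactSupport hΨcont hΨc
      (contDiff_fderiv_apply (hg i) (zero_add 1).le (b i)).continuous,
    integral_finsetSum _ fun i _ => integrable_mul_of_hasCompactSupport
      (hG.inner continuous_const) (hΨ'c i) (hg i).continuous, ← Finset.sum_neg_distrib]
  simp only [mul_comm ⟪_, _⟫]
  exact Finset.sum_congr rfl fun i _ =>
    integral_mul_fderiv_eq_neg_integral_mul_inner hΨ hG hΨc (hg i) (b i)

lemma integral_mul_gradInner_add_inner_laplacian (hΨ : ∀ y, HasGradientAt Ψ (G y) y)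
    (hG : Continuous G) (hΨc : HasCompactSupport Ψ) {h u : V → F} (hh : ContDiff ℝ 1 h)
    (hu : ContDiff ℝ 2 u) :
    ∫ y, Ψ y * (gradInner h u y + ⟪h y, Δ u y⟫) = -∫ y, ⟪h y, fderiv ℝ u y (G y)⟫ := by
  let e := stdOrthonormalBasis ℝ V
  have hdu (v : V) : ContDiff ℝ 1 fun y => fderiv ℝ u y v :=
    contDiff_fderiv_apply hu (by norm_num) v
  have divergence (y : V) : gradInner h u y + ⟪h y, Δ u y⟫
      = ∑ i, fderiv ℝ (fun z => ⟪h z, fderiv ℝ u z (e i)⟫) y (e i) := by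
    simp only [fderiv_inner_apply ℝ (hh.differentiable one_ne_zero y)
      ((hdu _).differentiable one_ne_zero y), Finset.sum_add_distrib, ← inner_sum,
      laplacian_eq_sum_fderiv_fderiv e hu, gradInner, e, add_comm]
  have flux (y : V) : ⟪h y, fderiv ℝ u y (G y)⟫
      = ∑ i, ⟪h y, fderiv ℝ u y (e i)⟫ * ⟪G y, e i⟫ := by
    conv_lhs => rw [← e.sum_repr' (G y)]
    simp only [map_sum, map_smul, inner_sum, inner_smul_right, real_inner_comm, mul_comm]
  simp only [divergence, flux]
  exact integral_mul_sum_fderiv_eq_neg e hΨ hG hΨc fun i => hh.inner ℝ (hdu (e i))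

lemma integral_mul_finrank_mul_add_radialDeriv (hΨ : ∀ y, HasGradientAt Ψ (G y) y)
    (hG : Continuous G) (hΨc : HasCompactSupport Ψ) {f : V → ℝ} (hf : ContDiff ℝ 1 f) (x : V) :
    ∫ y, Ψ y * (Module.finrank ℝ V * f y + radialDeriv x f y) = -∫ y, f y * ⟪G y, y - x⟫ := by
  let e := stdOrthonormalBasis ℝ V
  have hcoord (i) : ContDiff ℝ 1 fun y => ⟪e i, y - x⟫ :=
    contDiff_const.inner ℝ (contDiff_id.sub contDiff_const)
  have hcoord' (i) (y : V) : fderiv ℝ (fun y => ⟪e i, y - x⟫) y (e i) = 1 := by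
    rw [fderiv_inner_apply ℝ (differentiableAt_const _) (differentiableAt_fun_id.sub_const x)]
    simp [fderiv_sub_const]
  have divergence (y : V) : Module.finrank ℝ V * f y + radialDeriv x f y
      = ∑ i, fderiv ℝ (fun z => ⟪e i, z - x⟫ * f z) y (e i) := by
    conv_lhs => rw [radialDeriv, ← e.sum_repr' (y - x)]
    simp only [fderiv_fun_mul ((hcoord _).differentiable one_ne_zero y)
      (hf.differentiable one_ne_zero y), add_apply, _root_.smul_apply,
      smul_eq_mul, hcoord', Finset.sum_add_distrib, map_sum, map_smul]
    simp [add_comm]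
  have flux (y : V) : f y * ⟪G y, y - x⟫ = ∑ i, ⟪e i, y - x⟫ * f y * ⟪G y, e i⟫ := by
    rw [← e.sum_inner_mul_inner, Finset.mul_sum]
    exact Finset.sum_congr rfl fun i _ => by ring
  simp only [divergence, flux]
  exact integral_mul_sum_fderiv_eq_neg e hΨ hG hΨc fun i => (hcoord i).mul hf

end IntegrationByParts

/-! ### Cutoffs and the weights they define -/

/-- The profile of the smoothed energy and height: a nonincreasing cutoff equal to `1` on
`(-∞, 3/4]` and to `0` on `[1, ∞)`. -/
structure IsRadialCutoff (φ : ℝ → ℝ) : Prop where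
  contDiff : ContDiff ℝ 1 φ
  antitone : Antitone φ
  eq_one : ∀ t ≤ (3 / 4 : ℝ), φ t = 1
  eq_zero : ∀ t, (1 : ℝ) ≤ t → φ t = 0

section Weights

variable {V : Type*} [NormedAddCommGroup V]

/-- The weight `φ(|y-x|/t)` of the smoothed energy, supported in the ball of radius `t`. -/
def ballWeight (φ : ℝ → ℝ) (x : V) (t : ℝ) (y : V) : ℝ := φ (‖y - x‖ / t)

/-- The weight `-|y-x|⁻¹ φ'(|y-x|/t)` of the smoothed height, supported in the shell
`3t/4 ≤ |y-x| ≤ t`. -/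
def shellWeight (φ : ℝ → ℝ) (x : V) (t : ℝ) (y : V) : ℝ := -(‖y - x‖⁻¹ * deriv φ (‖y - x‖ / t))

/-- The compactly supported potential of the radial field `-ballWeight φ x t y • (y - x)`. It lets
one integrate by parts against the indicator-like weight `ballWeight`. -/
def ballPotential (φ : ℝ → ℝ) (x : V) (t : ℝ) (y : V) : ℝ :=
  1 / 2 * ∫ q in (‖y - x‖ ^ 2)..(t ^ 2), φ (√q / t)

lemma ballWeight_eq_zero_sub (φ : ℝ → ℝ) (x : V) (t : ℝ) (y : V) :
    ballWeight φ x t y = ballWeight φ 0 t (y - x) := by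
  simp [ballWeight]

lemma shellWeight_eq_zero_sub (φ : ℝ → ℝ) (x : V) (t : ℝ) (y : V) :
    shellWeight φ x t y = shellWeight φ 0 t (y - x) := by
  simp [shellWeight]

end Weights

namespace IsRadialCutoff

variable {φ : ℝ → ℝ} (hφ : IsRadialCutoff φ)
include hφ

lemma nonneg (s : ℝ) : 0 ≤ φ s :=
  (hφ.eq_zero _ (le_max_right s 1)).ge.trans (hφ.antitone (le_max_left s 1))

lemma le_one (s : ℝ) : φ s ≤ 1 :=
  (hφ.antitone (min_le_left s (3 / 4))).trans (hφ.eq_one _ (min_le_right s _)).le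

lemma continuous_deriv : Continuous (deriv φ) := hφ.contDiff.continuous_deriv le_rfl

lemma deriv_nonpos (s : ℝ) : deriv φ s ≤ 0 := hφ.antitone.deriv_nonpos

lemma deriv_eq_zero_of_le {s : ℝ} (hs : s ≤ 3 / 4) : deriv φ s = 0 :=
  IsLocalMax.deriv_eq_zero (.of_forall fun z => (hφ.le_one z).trans (hφ.eq_one s hs).ge)

lemma deriv_eq_zero_of_ge {s : ℝ} (hs : 1 ≤ s) : deriv φ s = 0 :=
  IsLocalMin.deriv_eq_zero (.of_forall fun z => (hφ.eq_zero s hs).le.trans (hφ.nonneg z))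

lemma exists_neg_deriv_le : ∃ M > 0, ∀ s, -deriv φ s ≤ M := by
  have hsupp : HasCompactSupport (deriv φ) :=
    HasCompactSupport.intro (isCompact_Icc (a := 3 / 4) (b := 1)) fun s hs =>
      (le_or_gt s (3 / 4)).elim hφ.deriv_eq_zero_of_le fun h =>
        hφ.deriv_eq_zero_of_ge (not_le.1 fun h' => hs ⟨h.le, h'⟩).le
  obtain ⟨C, hC⟩ := hsupp.exists_bound_of_continuous hφ.continuous_deriv
  exact ⟨max C 1, by positivity, fun s =>
    (neg_le_abs _).trans ((hC s).trans (le_max_left C 1))⟩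

lemma hasDerivAt_sqrt_div {t : ℝ} (ht : 0 < t) (q : ℝ) :
    HasDerivAt (fun q => φ (√q / t)) (deriv φ (√q / t) / (2 * √q * t)) q := by
  by_cases hq : √q / t < 3 / 4
  · have : (fun q => φ (√q / t)) =ᶠ[nhds q] fun _ => 1 := by
      filter_upwards [(Real.continuous_sqrt.div_const t).continuousAt.eventually_lt_const hq]
        with z hz using hφ.eq_one _ hz.le
    simpa [hφ.deriv_eq_zero_of_le hq.le] using (hasDerivAt_const q 1).congr_of_eventuallyEq this
  · have hq0 : q ≠ 0 := by
      rintro rfl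
      norm_num at hq
    refine (((hφ.contDiff.differentiable one_ne_zero _).hasDerivAt.comp q
      ((Real.hasDerivAt_sqrt hq0).div_const t))).congr_deriv ?_
    field_simp

section Normed

variable {V : Type*} [NormedAddCommGroup V] {x y : V} {t : ℝ}

lemma ballWeight_nonneg (x : V) (t : ℝ) (y : V) : 0 ≤ ballWeight φ x t y := hφ.nonneg _

lemma continuous_ballWeight (x : V) (t : ℝ) : Continuous (ballWeight φ x t) :=
  hφ.contDiff.continuous.comp (by fun_prop)

lemma mem_ball_of_ballWeight_ne_zero (ht : 0 < t) (h : ballWeight φ x t y ≠ 0) : y ∈ ball x t := by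
  rw [mem_ball_iff_norm]
  by_contra! hle
  exact h (hφ.eq_zero _ ((one_le_div ht).2 hle))

lemma shellWeight_nonneg (x : V) (t : ℝ) (y : V) : 0 ≤ shellWeight φ x t y :=
  neg_nonneg.2 (mul_nonpos_of_nonneg_of_nonpos (by positivity) (hφ.deriv_nonpos _))

lemma lt_norm_sub_of_shellWeight_ne_zero (ht : 0 < t) (h : shellWeight φ x t y ≠ 0) :
    3 / 4 * t < ‖y - x‖ := by
  by_contra! hle
  exact h (by simp [shellWeight, hφ.deriv_eq_zero_of_le ((div_le_iff₀ ht).2 hle)])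

lemma mem_ball_of_shellWeight_ne_zero (ht : 0 < t) (h : shellWeight φ x t y ≠ 0) :
    y ∈ ball x t := by
  rw [mem_ball_iff_norm]
  by_contra! hle
  exact h (by simp [shellWeight, hφ.deriv_eq_zero_of_ge ((one_le_div ht).2 hle)])

lemma shellWeight_mul_norm_sub_sq_le (x : V) (ht : 0 < t) (y : V) :
    shellWeight φ x t y * ‖y - x‖ ^ 2 ≤ shellWeight φ x t y * t ^ 2 := by
  by_cases hy : shellWeight φ x t y = 0
  · simp [hy]
  · have := hφ.shellWeight_nonneg x t y
    have := (mem_ball_iff_norm.1 (hφ.mem_ball_of_shellWeight_ne_zero ht hy)).le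
    gcongr

lemma continuous_shellWeight (x : V) (ht : 0 < t) : Continuous (shellWeight φ x t) := by
  refine continuous_iff_continuousAt.2 fun y => ?_
  rcases eq_or_ne y x with rfl | hy
  · have : shellWeight φ y t =ᶠ[nhds y] fun _ => 0 := by
      filter_upwards [ball_mem_nhds y (show 0 < 3 / 4 * t by positivity)] with z hz
      by_contra h
      exact (hφ.lt_norm_sub_of_shellWeight_ne_zero ht h).not_gt (mem_ball_iff_norm.1 hz)
    exact continuousAt_const.congr this.symm
  · have hderiv : Continuous fun y => deriv φ (‖y - x‖ / t) :=
      hφ.continuous_deriv.comp (by fun_prop)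
    have hinv : ContinuousAt (fun y => ‖y - x‖⁻¹) y :=
      ContinuousAt.inv₀ (by fun_prop) (norm_ne_zero_iff.2 (sub_ne_zero.2 hy))
    exact (hinv.mul hderiv.continuousAt).neg

lemma ballPotential_eq_zero (ht : 0 < t) (h : t ≤ ‖y - x‖) : ballPotential φ x t y = 0 := by
  have : ∫ q in (‖y - x‖ ^ 2)..(t ^ 2), φ (√q / t) = ∫ _ in (‖y - x‖ ^ 2)..(t ^ 2), (0 : ℝ) := by
    refine intervalIntegral.integral_congr fun q hq => hφ.eq_zero _ ?_
    rw [Set.uIcc_of_ge (pow_le_pow_left₀ ht.le h 2)] at hq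
    exact (one_le_div ht).2 (Real.le_sqrt_of_sq_le hq.1)
  rw [ballPotential, this, intervalIntegral.integral_zero, mul_zero]

lemma ballPotential_nonneg (x : V) (ht : 0 < t) (y : V) : 0 ≤ ballPotential φ x t y := by
  rcases le_total t ‖y - x‖ with h | h
  · exact (hφ.ballPotential_eq_zero ht h).ge
  · exact mul_nonneg (by norm_num) (intervalIntegral.integral_nonneg
      (pow_le_pow_left₀ (norm_nonneg _) h 2) fun q _ => hφ.nonneg _)

lemma mem_ball_of_ballPotential_ne_zero (ht : 0 < t) (h : ballPotential φ x t y ≠ 0) :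
    y ∈ ball x t :=
  mem_ball_iff_norm.2 (not_le.1 (mt (hφ.ballPotential_eq_zero ht) h))

lemma shellWeight_le_mul_ballWeight {M : ℝ} (hM : ∀ s, -deriv φ s ≤ M) {x' : V} {R : ℝ}
    (ht : 0 < t) (h : dist x x' + t ≤ 3 / 4 * R) (y : V) :
    shellWeight φ x t y ≤ 4 * M / (3 * t) * ballWeight φ x' R y := by
  have hR : 0 < R := by linarith [dist_nonneg (x := x) (y := x')]
  have hM0 : 0 ≤ M := (neg_nonneg.2 (hφ.deriv_nonpos 0)).trans (hM 0)
  by_cases h0 : shellWeight φ x t y = 0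
  · rw [h0]
    exact mul_nonneg (by positivity) (hφ.ballWeight_nonneg x' R y)
  have inner := hφ.lt_norm_sub_of_shellWeight_ne_zero ht h0
  have outer : dist y x < t := hφ.mem_ball_of_shellWeight_ne_zero ht h0
  have hone : ballWeight φ x' R y = 1 := by
    refine hφ.eq_one _ ((div_le_iff₀ hR).2 ?_)
    rw [← dist_eq_norm]
    linarith [dist_triangle y x x']
  calc shellWeight φ x t y = ‖y - x‖⁻¹ * -deriv φ (‖y - x‖ / t) := by rw [shellWeight, mul_neg]
    _ ≤ (3 / 4 * t)⁻¹ * M := by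
        gcongr
        · exact neg_nonneg.2 (hφ.deriv_nonpos _)
        · exact hM _
    _ = 4 * M / (3 * t) * ballWeight φ x' R y := by rw [hone]; field_simp

variable [ProperSpace V]

lemma hasCompactSupport_ballWeight (x : V) (ht : 0 < t) : HasCompactSupport (ballWeight φ x t) :=
  .intro (isCompact_closedBall x t) fun _ hy => by_contra fun h =>
    hy (ball_subset_closedBall (hφ.mem_ball_of_ballWeight_ne_zero ht h))

lemma hasCompactSupport_shellWeight (x : V) (ht : 0 < t) : HasCompactSupport (shellWeight φ x t) :=
  .intro (isCompact_closedBall x t) fun _ hy => by_contra fun h =>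
    hy (ball_subset_closedBall (hφ.mem_ball_of_shellWeight_ne_zero ht h))

lemma hasCompactSupport_ballPotential (x : V) (ht : 0 < t) :
    HasCompactSupport (ballPotential φ x t) :=
  .intro (isCompact_closedBall x t) fun _ hy => by_contra fun h =>
    hy (ball_subset_closedBall (hφ.mem_ball_of_ballPotential_ne_zero ht h))

end Normed

end IsRadialCutoff

section Gradients

variable {V : Type*} [NormedAddCommGroup V] [InnerProductSpace ℝ V] [CompleteSpace V]
  {φ : ℝ → ℝ} {t : ℝ}

lemma hasGradientAt_comp_norm_sub_sq {g : ℝ → ℝ} {g' : ℝ} {x y : V}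
    (hg : HasDerivAt g g' (‖y - x‖ ^ 2)) :
    HasGradientAt (fun z => g (‖z - x‖ ^ 2)) ((2 * g') • (y - x)) y := by
  refine (hg.comp_hasFDerivAt y ((hasFDerivAt_id y).sub_const x).norm_sq).congr_fderiv ?_
  ext v
  simp [mul_assoc, mul_left_comm]

lemma IsRadialCutoff.hasGradientAt_ballWeight (hφ : IsRadialCutoff φ) (x : V) (ht : 0 < t)
    (y : V) : HasGradientAt (ballWeight φ x t) (-(shellWeight φ x t y / t) • (y - x)) y := by
  have hroot (z : V) : √(‖z - x‖ ^ 2) = ‖z - x‖ := Real.sqrt_sq (norm_nonneg _)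
  have h := hasGradientAt_comp_norm_sub_sq (hφ.hasDerivAt_sqrt_div ht (‖y - x‖ ^ 2))
  simp only [hroot] at h
  have hcoef : 2 * (deriv φ (‖y - x‖ / t) / (2 * ‖y - x‖ * t)) = -(shellWeight φ x t y / t) := by
    simp only [shellWeight]
    field_simp
  exact hcoef ▸ h

lemma IsRadialCutoff.hasGradientAt_ballPotential (hφ : IsRadialCutoff φ) (x : V) (t : ℝ) (y : V) :
    HasGradientAt (ballPotential φ x t) (-ballWeight φ x t y • (y - x)) y := by
  have hcont : Continuous fun q => φ (√q / t) :=
    hφ.contDiff.continuous.comp (Real.continuous_sqrt.div_const t)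
  have h := hasGradientAt_comp_norm_sub_sq ((intervalIntegral.integral_hasDerivAt_left
    (hcont.intervalIntegrable (‖y - x‖ ^ 2) (t ^ 2)) (hcont.stronglyMeasurableAtFilter _ _)
    hcont.continuousAt).const_mul (1 / 2))
  rw [Real.sqrt_sq (norm_nonneg _)] at h
  have hcoef : 2 * (1 / 2 * -φ (‖y - x‖ / t)) = -ballWeight φ x t y := by
    simp only [ballWeight]
    ring
  exact hcoef ▸ h

end Gradients

/-! ### Varying the centre and the radius of a weight -/

section ParametricIntegrals

lemma hasDerivAt_integral_mul_comp_add_smul {X V : Type*} [TopologicalSpace X] [MeasurableSpace X]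
    [OpensMeasurableSpace X] {μ : Measure X} [IsFiniteMeasureOnCompacts μ]
    [NormedAddCommGroup V] [NormedSpace ℝ V] {K : X → ℝ} (hK : Continuous K)
    (hKc : HasCompactSupport K) {f : V → ℝ} (hf : ContDiff ℝ 1 f) {a b : X → V}
    (ha : Continuous a) (hb : Continuous b) (s₀ : ℝ) :
    HasDerivAt (fun s : ℝ => ∫ z, K z * f (a z + s • b z) ∂μ)
      (∫ z, K z * fderiv ℝ f (a z + s₀ • b z) (b z) ∂μ) s₀ := by
  have hderiv : Continuous fun p : ℝ × X => fderiv ℝ f (a p.2 + p.1 • b p.2) (b p.2) :=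
    ((hf.continuous_fderiv one_ne_zero).comp (by fun_prop)).clm_apply (by fun_prop)
  obtain ⟨C, hC⟩ := ((isCompact_closedBall s₀ 1).prod hKc.isCompact).exists_bound_of_continuousOn
    hderiv.continuousOn
  have hint (s : ℝ) : Integrable (fun z => K z * f (a z + s • b z)) μ :=
    integrable_mul_of_hasCompactSupport hK hKc (hf.continuous.comp (by fun_prop))
  refine (hasDerivAt_integral_of_dominated_loc_of_deriv_le (bound := fun z => |K z| * C)
    (F' := fun s z => K z * fderiv ℝ f (a z + s • b z) (b z))
    (closedBall_mem_nhds s₀ one_pos) (.of_forall fun s => (hint s).aestronglyMeasurable)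
    (hint s₀) ?_ ?_ ?_ ?_).2
  · exact (integrable_mul_of_hasCompactSupport hK hKc
      (hderiv.comp (Continuous.prodMk_right s₀))).aestronglyMeasurable
  · refine .of_forall fun z s hs => ?_
    rw [norm_mul, Real.norm_eq_abs]
    by_cases hz : K z = 0
    · simp [hz]
    · gcongr
      exact hC (s, z) ⟨hs, subset_tsupport _ hz⟩
  · exact integrable_mul_of_hasCompactSupport hK.abs hKc.norm continuous_const
  · refine .of_forall fun z s _ => HasDerivAt.const_mul (K z) ?_
    have hline : HasDerivAt (fun s : ℝ => a z + s • b z) (b z) s := by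
      simpa using ((hasDerivAt_id s).smul_const (b z)).const_add (a z)
    exact (hf.differentiable one_ne_zero _).hasFDerivAt.comp_hasDerivAt s hline

variable {V : Type*} [NormedAddCommGroup V] [InnerProductSpace ℝ V] [FiniteDimensional ℝ V]
  [MeasurableSpace V] [BorelSpace V] {K f : V → ℝ}

lemma hasDerivAt_integral_translate_mul (hK : Continuous K) (hKc : HasCompactSupport K)
    (hf : ContDiff ℝ 1 f) (x v : V) (s : ℝ) :
    HasDerivAt (fun s : ℝ => ∫ y, K (y - (x + s • v)) * f y)
      (∫ y, K (y - (x + s • v)) * fderiv ℝ f y v) s := by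
  have recentre (g : V → ℝ) (c : V) : ∫ y, K (y - c) * g y = ∫ z, K z * g (z + c) := by
    simpa using integral_sub_right_eq_self (μ := volume) (fun z => K z * g (z + c)) c
  simp only [recentre, ← add_assoc]
  exact hasDerivAt_integral_mul_comp_add_smul hK hKc hf (continuous_id.add continuous_const)
    continuous_const s

lemma integral_eq_pow_finrank_mul_integral_comp_smul (g : V → ℝ) (x : V) {t : ℝ} (ht : 0 < t) :
    ∫ y, g y = t ^ Module.finrank ℝ V * ∫ z, g (x + t • z) := by
  rw [Measure.integral_comp_smul volume (fun y => g (x + y)) t, integral_add_left_eq_self,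
    smul_eq_mul, abs_of_pos (by positivity), mul_inv_cancel_left₀ (by positivity)]

lemma hasDerivAt_integral_dilate_mul (hK : Continuous K) (hKc : HasCompactSupport K)
    (hf : ContDiff ℝ 1 f) (x : V) {w : ℝ → V → ℝ} {k : ℤ}
    (hw : ∀ s > 0, ∀ z, w s (x + s • z) = s ^ k * K z) {t : ℝ} (ht : 0 < t) :
    HasDerivAt (fun s => ∫ y, w s y * f y)
      ((Module.finrank ℝ V + k) / t * (∫ y, w t y * f y)
        + 1 / t * ∫ y, w t y * radialDeriv x f y) t := by
  have rescale (g : V → ℝ) {s : ℝ} (hs : 0 < s) : ∫ y, w s y * g y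
      = s ^ (Module.finrank ℝ V + k : ℤ) * ∫ z, K z * g (x + s • z) := by
    rw [integral_eq_pow_finrank_mul_integral_comp_smul _ x hs, zpow_add₀ hs.ne', zpow_natCast]
    simp only [hw s hs, mul_assoc, integral_const_mul]
  refine (((hasDerivAt_zpow (Module.finrank ℝ V + k : ℤ) t (.inl ht.ne')).mul
    (hasDerivAt_integral_mul_comp_add_smul (μ := volume) (a := fun _ => x) (b := id) hK hKc hf
      continuous_const continuous_id t)).congr_of_eventuallyEq ?_).congr_deriv ?_
  · filter_upwards [Ioi_mem_nhds ht] with s hs using rescale f hs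
  · rw [rescale f ht, rescale (radialDeriv x f) ht]
    simp only [radialDeriv, add_sub_cancel_left, map_smul, smul_eq_mul, mul_left_comm _ t,
      integral_const_mul, id_eq, zpow_sub_one₀ ht.ne']
    push_cast
    field_simp

variable {φ : ℝ → ℝ} (hφ : IsRadialCutoff φ) (hf : ContDiff ℝ 1 f)
include hφ hf

lemma IsRadialCutoff.hasDerivAt_integral_ballWeight_mul (x : V) {t : ℝ} (ht : 0 < t) :
    HasDerivAt (fun t => ∫ y, ballWeight φ x t y * f y)
      (Module.finrank ℝ V / t * (∫ y, ballWeight φ x t y * f y)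
        + 1 / t * ∫ y, ballWeight φ x t y * radialDeriv x f y) t := by
  simpa using hasDerivAt_integral_dilate_mul (k := 0) (hφ.continuous_ballWeight 0 1)
    (hφ.hasCompactSupport_ballWeight 0 one_pos) hf x (w := ballWeight φ x) (fun s hs z => by
      simp [ballWeight, norm_smul, abs_of_pos hs, hs.ne']) ht

lemma IsRadialCutoff.hasDerivAt_integral_shellWeight_mul (x : V) {t : ℝ} (ht : 0 < t) :
    HasDerivAt (fun t => ∫ y, shellWeight φ x t y * f y)
      ((Module.finrank ℝ V - 1) / t * (∫ y, shellWeight φ x t y * f y)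
        + 1 / t * ∫ y, shellWeight φ x t y * radialDeriv x f y) t := by
  simpa [sub_eq_add_neg] using hasDerivAt_integral_dilate_mul (k := -1)
    (hφ.continuous_shellWeight 0 one_pos) (hφ.hasCompactSupport_shellWeight 0 one_pos) hf x
    (w := shellWeight φ x) (fun s hs z => by
      simp [shellWeight, norm_smul, abs_of_pos hs, hs.ne', mul_assoc, mul_left_comm]) ht

lemma IsRadialCutoff.hasDerivAt_integral_ballWeight_translate_mul (x v : V) {t : ℝ} (ht : 0 < t)
    (s : ℝ) : HasDerivAt (fun s : ℝ => ∫ y, ballWeight φ (x + s • v) t y * f y)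
      (∫ y, ballWeight φ (x + s • v) t y * fderiv ℝ f y v) s := by
  simpa only [← ballWeight_eq_zero_sub] using hasDerivAt_integral_translate_mul
    (hφ.continuous_ballWeight 0 t) (hφ.hasCompactSupport_ballWeight 0 ht) hf x v s

lemma IsRadialCutoff.hasDerivAt_integral_shellWeight_translate_mul (x v : V) {t : ℝ} (ht : 0 < t)
    (s : ℝ) : HasDerivAt (fun s : ℝ => ∫ y, shellWeight φ (x + s • v) t y * f y)
      (∫ y, shellWeight φ (x + s • v) t y * fderiv ℝ f y v) s := by
  simpa only [← shellWeight_eq_zero_sub] using hasDerivAt_integral_translate_mul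
    (hφ.continuous_shellWeight 0 ht) (hφ.hasCompactSupport_shellWeight 0 ht) hf x v s

end ParametricIntegrals

/-! ### Height, energy and frequency -/

section ShellPairing

variable {V F : Type*} [NormedAddCommGroup V] [InnerProductSpace ℝ V] [FiniteDimensional ℝ V]
  [MeasurableSpace V] [BorelSpace V] [NormedAddCommGroup F] [InnerProductSpace ℝ F]
  {φ : ℝ → ℝ} {u f g h : V → F} {x : V} {t : ℝ}

/-- The `L²` pairing of two maps over the shell around `x` of radius `t`, weighted by
`shellWeight`. -/
def shellInner (φ : ℝ → ℝ) (x : V) (t : ℝ) (f g : V → F) : ℝ :=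
  ∫ y, shellWeight φ x t y * ⟪f y, g y⟫

/-- The smoothed height `H_φ(x, t)`. -/
def smoothedHeight (φ : ℝ → ℝ) (u : V → F) (x : V) (t : ℝ) : ℝ := shellInner φ x t u u

/-- The smoothed energy `D_φ(x, t)`. -/
def smoothedEnergy (φ : ℝ → ℝ) (u : V → F) (x : V) (t : ℝ) : ℝ :=
  ∫ y, ballWeight φ x t y * gradInner u u y

/-- The smoothed frequency `N_φ(x, t)`; it takes the junk value `0` where the height vanishes. -/
def smoothedFrequency (φ : ℝ → ℝ) (u : V → F) (x : V) (t : ℝ) : ℝ :=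
  t * smoothedEnergy φ u x t / smoothedHeight φ u x t

lemma shellInner_comm (φ : ℝ → ℝ) (x : V) (t : ℝ) (f g : V → F) :
    shellInner φ x t f g = shellInner φ x t g f := by
  simp only [shellInner, real_inner_comm]

lemma shellInner_smul_left (φ : ℝ → ℝ) (x : V) (t : ℝ) (c : ℝ) (f g : V → F) :
    shellInner φ x t (c • f) g = c * shellInner φ x t f g := by
  simp only [shellInner, Pi.smul_apply, real_inner_smul_left, mul_left_comm _ c,
    integral_const_mul]

namespace IsRadialCutoff

variable (hφ : IsRadialCutoff φ)
include hφ

lemma shellInner_self_nonneg (x : V) (t : ℝ) (f : V → F) : 0 ≤ shellInner φ x t f f :=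
  integral_nonneg fun y => mul_nonneg (hφ.shellWeight_nonneg x t y) real_inner_self_nonneg

lemma smoothedEnergy_nonneg (u : V → F) (x : V) (t : ℝ) : 0 ≤ smoothedEnergy φ u x t :=
  integral_nonneg fun y => mul_nonneg (hφ.ballWeight_nonneg x t y) (gradInner_self_nonneg u y)

lemma smoothedFrequency_nonneg (u : V → F) (x : V) (ht : 0 ≤ t) :
    0 ≤ smoothedFrequency φ u x t :=
  div_nonneg (mul_nonneg ht (hφ.smoothedEnergy_nonneg u x t)) (hφ.shellInner_self_nonneg x t u)

lemma integrable_ballWeight_mul (ht : 0 < t) {f : V → ℝ} (hf : Continuous f) :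
    Integrable fun y => ballWeight φ x t y * f y :=
  integrable_mul_of_hasCompactSupport (hφ.continuous_ballWeight x t)
    (hφ.hasCompactSupport_ballWeight x ht) hf

lemma integrable_shellWeight_mul (ht : 0 < t) {f : V → ℝ} (hf : Continuous f) :
    Integrable fun y => shellWeight φ x t y * f y :=
  integrable_mul_of_hasCompactSupport (hφ.continuous_shellWeight x ht)
    (hφ.hasCompactSupport_shellWeight x ht) hf

lemma shellInner_sub_left (ht : 0 < t) (hf : Continuous f) (hg : Continuous g)
    (hh : Continuous h) :
    shellInner φ x t (f - g) h = shellInner φ x t f h - shellInner φ x t g h := by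
  simp only [shellInner, Pi.sub_apply, inner_sub_left, mul_sub]
  exact integral_sub (hφ.integrable_shellWeight_mul ht (hf.inner hh))
    (hφ.integrable_shellWeight_mul ht (hg.inner hh))

lemma shellInner_homogeneityDefect_left (hu : ContDiff ℝ 1 u) (hh : Continuous h) (c : V) (a : ℝ)
    (ht : 0 < t) : shellInner φ x t (homogeneityDefect c a u) h
      = shellInner φ x t (radialDeriv c u) h - a * shellInner φ x t u h := by
  rw [← shellInner_smul_left]
  exact hφ.shellInner_sub_left ht (contDiff_radialDeriv hu (zero_add 1).le c).continuous
    (hu.continuous.const_smul a) hh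

lemma abs_shellInner_le (ht : 0 < t) (hf : Continuous f) (hg : Continuous g) :
    |shellInner φ x t f g| ≤ 1 / 2 * (shellInner φ x t f f + shellInner φ x t g g) := by
  have expand (c : ℝ) : shellInner φ x t (f - c • g) (f - c • g) = shellInner φ x t f f
      - 2 * c * shellInner φ x t f g + c ^ 2 * shellInner φ x t g g := by
    have hcg := hg.const_smul c
    rw [hφ.shellInner_sub_left ht hf hcg (hf.sub hcg), shellInner_smul_left,
      shellInner_comm φ x t f, shellInner_comm φ x t g, hφ.shellInner_sub_left ht hf hcg hf,
      hφ.shellInner_sub_left ht hf hcg hg, shellInner_smul_left, shellInner_smul_left,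
      shellInner_comm φ x t g f]
    ring
  have plus := hφ.shellInner_self_nonneg x t (f - (-1 : ℝ) • g)
  have minus := hφ.shellInner_self_nonneg x t (f - (1 : ℝ) • g)
  rw [expand] at plus minus
  rw [abs_le]
  constructor <;> linarith

lemma shellInner_smul_add_smul_self_le (ht : 0 < t) (hf : Continuous f) (hg : Continuous g)
    (α β : ℝ) : shellInner φ x t (α • f + β • g) (α • f + β • g)
      ≤ (α ^ 2 + β ^ 2) * (shellInner φ x t f f + shellInner φ x t g g) := by
  have hff := hφ.integrable_shellWeight_mul (x := x) ht (hf.inner hf)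
  have hgg := hφ.integrable_shellWeight_mul (x := x) ht (hg.inner hg)
  have hsum : Continuous (α • f + β • g) := (hf.const_smul α).add (hg.const_smul β)
  simp only [shellInner]
  rw [← integral_add hff hgg, ← integral_const_mul]
  refine integral_mono (hφ.integrable_shellWeight_mul ht (hsum.inner hsum))
    ((hff.add hgg).const_mul _) fun y => ?_
  have cauchy_schwarz : ⟪α • f y + β • g y, α • f y + β • g y⟫
      ≤ (α ^ 2 + β ^ 2) * (⟪f y, f y⟫ + ⟪g y, g y⟫) := by
    have := real_inner_self_nonneg (x := β • f y - α • g y)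
    simp only [inner_sub_left, inner_sub_right, inner_add_left, inner_add_right,
      real_inner_smul_left, real_inner_smul_right, real_inner_comm (f y) (g y)] at this ⊢
    linarith
  calc _ ≤ shellWeight φ x t y * ((α ^ 2 + β ^ 2) * (⟪f y, f y⟫ + ⟪g y, g y⟫)) :=
        mul_le_mul_of_nonneg_left cauchy_schwarz (hφ.shellWeight_nonneg x t y)
    _ = _ := by ring

variable (ht : 0 < t)
include ht

lemma integral_ballWeight_mul_gradInner (hh : ContDiff ℝ 1 h) (hu : ContDiff ℝ 2 u)
    (hΔ : ∀ y ∈ ball x t, Δ u y = 0) :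
    ∫ y, ballWeight φ x t y * gradInner h u y = 1 / t * shellInner φ x t h (radialDeriv x u) := by
  have hG : Continuous fun y => -(shellWeight φ x t y / t) • (y - x) :=
    ((hφ.continuous_shellWeight x ht).div_const t).neg.smul (by fun_prop)
  have green := integral_mul_gradInner_add_inner_laplacian (hφ.hasGradientAt_ballWeight x ht) hG
    (hφ.hasCompactSupport_ballWeight x ht) hh hu
  have harmonic (y : V) : ballWeight φ x t y * (gradInner h u y + ⟪h y, Δ u y⟫)
      = ballWeight φ x t y * gradInner h u y := by
    by_cases hy : ballWeight φ x t y = 0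
    · simp [hy]
    · simp [hΔ y (hφ.mem_ball_of_ballWeight_ne_zero ht hy)]
  simp only [harmonic] at green
  rw [green, shellInner, ← integral_const_mul, ← integral_neg]
  refine integral_congr_ae (.of_forall fun y => ?_)
  simp only [map_smul, inner_smul_right, radialDeriv]
  ring

lemma integral_ballWeight_mul_inner_radialDeriv_nonneg (hu : ContDiff ℝ 2 u)
    (hΔ : ∀ y ∈ ball x t, Δ u y = 0) :
    0 ≤ ∫ y, ballWeight φ x t y * ⟪u y, radialDeriv x u y⟫ := by
  have hG : Continuous fun y => -ballWeight φ x t y • (y - x) :=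
    (hφ.continuous_ballWeight x t).neg.smul (by fun_prop)
  have green := integral_mul_gradInner_add_inner_laplacian (hφ.hasGradientAt_ballPotential x t) hG
    (hφ.hasCompactSupport_ballPotential x ht) (hu.of_le one_le_two) hu
  simp only [map_smul, inner_smul_right, neg_mul, integral_neg, neg_neg] at green
  refine (integral_nonneg fun y => ?_).trans_eq green
  by_cases hy : ballPotential φ x t y = 0
  · simp [hy]
  · simpa [hΔ y (hφ.mem_ball_of_ballPotential_ne_zero ht hy)] using
      mul_nonneg (hφ.ballPotential_nonneg x ht y) (gradInner_self_nonneg u y)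

lemma integral_ballWeight_mul_finrank_mul_add_radialDeriv_le {f : V → ℝ} (hf : ContDiff ℝ 1 f)
    (hf0 : ∀ y, 0 ≤ f y) :
    ∫ y, ballWeight φ x t y * (Module.finrank ℝ V * f y + radialDeriv x f y)
      ≤ t * ∫ y, shellWeight φ x t y * f y := by
  have hweight : Continuous fun y => -(shellWeight φ x t y / t) :=
    ((hφ.continuous_shellWeight x ht).div_const t).neg
  rw [integral_mul_finrank_mul_add_radialDeriv (hφ.hasGradientAt_ballWeight x ht)
    (hweight.smul (by fun_prop)) (hφ.hasCompactSupport_ballWeight x ht) hf x,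
    ← integral_const_mul, ← integral_neg]
  have flux (y : V) : -(f y * ⟪-(shellWeight φ x t y / t) • (y - x), y - x⟫)
      = shellWeight φ x t y * ‖y - x‖ ^ 2 * (f y / t) := by
    rw [real_inner_smul_left, real_inner_self_eq_norm_sq]
    ring
  simp only [flux]
  refine integral_mono_of_nonneg (.of_forall fun y => ?_)
    ((hφ.integrable_shellWeight_mul ht hf.continuous).const_mul t) (.of_forall fun y => ?_)
  · exact mul_nonneg (mul_nonneg (hφ.shellWeight_nonneg x t y) (sq_nonneg _))
      (div_nonneg (hf0 y) ht.le)
  · calc shellWeight φ x t y * ‖y - x‖ ^ 2 * (f y / t)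
        ≤ shellWeight φ x t y * t ^ 2 * (f y / t) :=
          mul_le_mul_of_nonneg_right (hφ.shellWeight_mul_norm_sub_sq_le x ht y)
            (div_nonneg (hf0 y) ht.le)
      _ = t * (shellWeight φ x t y * f y) := by field_simp

variable (hu : ContDiff ℝ 2 u) (hΔ : ∀ y ∈ ball x t, Δ u y = 0)
include hu hΔ

lemma shellInner_radialDeriv_right :
    shellInner φ x t u (radialDeriv x u) = t * smoothedEnergy φ u x t := by
  rw [smoothedEnergy, hφ.integral_ballWeight_mul_gradInner ht (hu.of_le one_le_two) hu hΔ]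
  field_simp

lemma finrank_mul_integral_ballWeight_le :
    Module.finrank ℝ V * ∫ y, ballWeight φ x t y * ⟪u y, u y⟫ ≤ t * smoothedHeight φ u x t := by
  have hu1 : ContDiff ℝ 1 u := hu.of_le one_le_two
  have hsq : ContDiff ℝ 1 fun y => ⟪u y, u y⟫ := hu1.inner ℝ hu1
  have hrad : Continuous fun y => ⟪u y, radialDeriv x u y⟫ :=
    hu.continuous.inner (contDiff_radialDeriv hu1 (zero_add 1).le x).continuous
  calc Module.finrank ℝ V * ∫ y, ballWeight φ x t y * ⟪u y, u y⟫
      ≤ Module.finrank ℝ V * (∫ y, ballWeight φ x t y * ⟪u y, u y⟫)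
        + 2 * ∫ y, ballWeight φ x t y * ⟪u y, radialDeriv x u y⟫ := by
        linarith [hφ.integral_ballWeight_mul_inner_radialDeriv_nonneg ht hu hΔ]
    _ = ∫ y, ballWeight φ x t y * (Module.finrank ℝ V * ⟪u y, u y⟫
          + radialDeriv x (fun z => ⟪u z, u z⟫) y) := by
        rw [← integral_const_mul, ← integral_const_mul,
          ← integral_add ((hφ.integrable_ballWeight_mul ht hsq.continuous).const_mul _)
            ((hφ.integrable_ballWeight_mul ht hrad).const_mul _)]
        refine integral_congr_ae (.of_forall fun y => ?_)
        simp only [radialDeriv, fderiv_inner_self (hu.differentiable two_ne_zero y)]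
        ring
    _ ≤ t * smoothedHeight φ u x t :=
        hφ.integral_ballWeight_mul_finrank_mul_add_radialDeriv_le ht hsq
          fun _ => real_inner_self_nonneg

/-! ### Variation of the frequency -/

lemma hasDerivAt_smoothedHeight : HasDerivAt (smoothedHeight φ u x)
    ((Module.finrank ℝ V - 1) / t * smoothedHeight φ u x t + 2 * smoothedEnergy φ u x t) t := by
  have hu1 : ContDiff ℝ 1 u := hu.of_le one_le_two
  refine (hφ.hasDerivAt_integral_shellWeight_mul (hu1.inner ℝ hu1) x ht).congr_deriv ?_
  have flux : ∫ y, shellWeight φ x t y * radialDeriv x (fun z => ⟪u z, u z⟫) y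
      = 2 * (t * smoothedEnergy φ u x t) := by
    rw [← hφ.shellInner_radialDeriv_right ht hu hΔ, shellInner, ← integral_const_mul]
    simp only [radialDeriv, fderiv_inner_self (hu.differentiable two_ne_zero _),
      mul_left_comm _ (2 : ℝ)]
  rw [flux, smoothedHeight, shellInner]
  field_simp

lemma hasDerivAt_smoothedEnergy : HasDerivAt (smoothedEnergy φ u x)
    ((Module.finrank ℝ V - 2) / t * smoothedEnergy φ u x t
      + 2 / t ^ 2 * shellInner φ x t (radialDeriv x u) (radialDeriv x u)) t := by
  have hrad : ContDiff ℝ 1 (radialDeriv x u) := contDiff_radialDeriv hu one_add_one_eq_two.le x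
  refine (hφ.hasDerivAt_integral_ballWeight_mul (contDiff_gradInner_self hu) x ht).congr_deriv ?_
  have commute (y : V) : radialDeriv x (gradInner u u) y
      = 2 * gradInner (radialDeriv x u) u y - 2 * gradInner u u y := by
    rw [radialDeriv, fderiv_gradInner_self hu, gradInner_radialDeriv_left hu]
    ring
  have flux : ∫ y, ballWeight φ x t y * radialDeriv x (gradInner u u) y
      = 2 / t * shellInner φ x t (radialDeriv x u) (radialDeriv x u)
        - 2 * smoothedEnergy φ u x t := by
    have green := hφ.integral_ballWeight_mul_gradInner ht hrad hu hΔ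
    simp only [commute, mul_sub, mul_left_comm _ (2 : ℝ)]
    rw [integral_sub
      ((hφ.integrable_ballWeight_mul ht (continuous_gradInner hrad (hu.of_le one_le_two))).const_mul
        2)
      ((hφ.integrable_ballWeight_mul ht (contDiff_gradInner_self hu).continuous).const_mul 2),
      integral_const_mul, integral_const_mul, green, smoothedEnergy]
    ring
  rw [flux, smoothedEnergy]
  field_simp
  ring

variable (hH : smoothedHeight φ u x t ≠ 0)
include hH

lemma smoothedFrequency_mul_smoothedHeight :
    smoothedFrequency φ u x t * smoothedHeight φ u x t = shellInner φ x t u (radialDeriv x u) := by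
  rw [smoothedFrequency, div_mul_cancel₀ _ hH, hφ.shellInner_radialDeriv_right ht hu hΔ]

lemma shellInner_homogeneityDefect_smoothedFrequency_left :
    shellInner φ x t (homogeneityDefect x (smoothedFrequency φ u x t) u) u = 0 := by
  rw [hφ.shellInner_homogeneityDefect_left (hu.of_le one_le_two) hu.continuous x _ ht,
    shellInner_comm, ← hφ.smoothedFrequency_mul_smoothedHeight ht hu hΔ hH, smoothedHeight,
    sub_self]

lemma shellInner_homogeneityDefect_self (a : ℝ) :
    shellInner φ x t (homogeneityDefect x a u) (homogeneityDefect x a u)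
      = shellInner φ x t (radialDeriv x u) (radialDeriv x u)
        + (a ^ 2 - 2 * a * smoothedFrequency φ u x t) * smoothedHeight φ u x t := by
  have hu1 : ContDiff ℝ 1 u := hu.of_le one_le_two
  have hrad := (contDiff_radialDeriv hu1 (zero_add 1).le x).continuous
  have hdefect := (contDiff_homogeneityDefect hu1 (zero_add 1).le x a).continuous
  rw [hφ.shellInner_homogeneityDefect_left hu1 hdefect x a ht,
    shellInner_comm φ x t (radialDeriv x u), shellInner_comm φ x t u,
    hφ.shellInner_homogeneityDefect_left hu1 hrad x a ht,
    hφ.shellInner_homogeneityDefect_left hu1 hu.continuous x a ht,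
    shellInner_comm φ x t (radialDeriv x u) u, sub_mul, mul_assoc,
    hφ.smoothedFrequency_mul_smoothedHeight ht hu hΔ hH, smoothedHeight]
  ring

lemma shellInner_homogeneityDefect_smoothedFrequency_le (a : ℝ) :
    shellInner φ x t (homogeneityDefect x (smoothedFrequency φ u x t) u)
        (homogeneityDefect x (smoothedFrequency φ u x t) u)
      ≤ shellInner φ x t (homogeneityDefect x a u) (homogeneityDefect x a u) := by
  rw [hφ.shellInner_homogeneityDefect_self ht hu hΔ hH,
    hφ.shellInner_homogeneityDefect_self ht hu hΔ hH]
  have height_nonneg : 0 ≤ smoothedHeight φ u x t := hφ.shellInner_self_nonneg x t u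
  linarith [mul_nonneg (sq_nonneg (a - smoothedFrequency φ u x t)) height_nonneg]

lemma hasDerivAt_smoothedFrequency : HasDerivAt (smoothedFrequency φ u x)
    (2 / (t * smoothedHeight φ u x t) *
      shellInner φ x t (homogeneityDefect x (smoothedFrequency φ u x t) u)
        (homogeneityDefect x (smoothedFrequency φ u x t) u)) t := by
  refine (((hasDerivAt_id t).mul (hφ.hasDerivAt_smoothedEnergy ht hu hΔ)).div
    (hφ.hasDerivAt_smoothedHeight ht hu hΔ) hH).congr_deriv ?_
  rw [hφ.shellInner_homogeneityDefect_self ht hu hΔ hH]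
  simp only [smoothedFrequency, Pi.mul_apply, id]
  field_simp
  ring

omit hu hΔ hH in
lemma hasDerivAt_smoothedFrequency_add_smul (hu : ContDiff ℝ 2 u) (x v : V) (s : ℝ)
    (hΔ : ∀ y ∈ ball (x + s • v) t, Δ u y = 0) (hH : smoothedHeight φ u (x + s • v) t ≠ 0) :
    HasDerivAt (fun s : ℝ => smoothedFrequency φ u (x + s • v) t)
      (2 / smoothedHeight φ u (x + s • v) t * shellInner φ (x + s • v) t
        (homogeneityDefect (x + s • v) (smoothedFrequency φ u (x + s • v) t) u)
        fun y => fderiv ℝ u y v) s := by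
  have hu1 : ContDiff ℝ 1 u := hu.of_le one_le_two
  have hdu : ContDiff ℝ 1 fun y => fderiv ℝ u y v := contDiff_fderiv_apply hu (by norm_num) v
  have height : HasDerivAt (fun s : ℝ => smoothedHeight φ u (x + s • v) t)
      (2 * shellInner φ (x + s • v) t u fun y => fderiv ℝ u y v) s := by
    refine (hφ.hasDerivAt_integral_shellWeight_translate_mul (hu1.inner ℝ hu1) x v ht
      s).congr_deriv ?_
    simp only [fderiv_inner_self (hu.differentiable two_ne_zero _), mul_left_comm _ (2 : ℝ),
      integral_const_mul, shellInner]
  have energy : HasDerivAt (fun s : ℝ => smoothedEnergy φ u (x + s • v) t)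
      (2 / t * shellInner φ (x + s • v) t (fun y => fderiv ℝ u y v)
        (radialDeriv (x + s • v) u)) s := by
    refine (hφ.hasDerivAt_integral_ballWeight_translate_mul (contDiff_gradInner_self hu) x v ht
      s).congr_deriv ?_
    simp only [fderiv_gradInner_self hu, mul_left_comm _ (2 : ℝ), integral_const_mul,
      hφ.integral_ballWeight_mul_gradInner ht hdu hu hΔ]
    ring
  refine ((energy.const_mul t).div height hH).congr_deriv ?_
  rw [hφ.shellInner_homogeneityDefect_left hu1 hdu.continuous _ _ ht,
    shellInner_comm φ _ t (radialDeriv _ u), smoothedFrequency]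
  field_simp

end IsRadialCutoff

end ShellPairing

/-! ### Frequency pinching for globally defined maps -/

/-- The constant of the frequency pinching estimate in dimension `n`, for a cutoff of slope at
least `-M` and frequencies at most `Λ`: two comparisons of shells with different centres, and
doubling of the height between radii of ratio at most `8`. -/
def pinchingConst (n : ℕ) (M Λ : ℝ) : ℝ :=
  16 * M / (3 * n) * (8 ^ (n - 1 + 2 * Λ) * (8 * M / (3 * n)))

section Pinching

variable {V F : Type*} [NormedAddCommGroup V] [InnerProductSpace ℝ V] [FiniteDimensional ℝ V]
  [MeasurableSpace V] [BorelSpace V] [NormedAddCommGroup F] [InnerProductSpace ℝ F]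
  {φ : ℝ → ℝ} {u : V → F} {c x x₁ x₂ : V} {r s t M Λ : ℝ}

namespace IsRadialCutoff

variable (hφ : IsRadialCutoff φ)
include hφ

lemma shellInner_self_le_of_dist_add_le [Nontrivial V] (hM : ∀ s, -deriv φ s ≤ M) {R : ℝ}
    (ht : 0 < t) (h : dist x c + t ≤ 3 / 4 * R) {w : V → F} (hw : ContDiff ℝ 2 w)
    (hΔ : ∀ y ∈ ball c R, Δ w y = 0) : shellInner φ x t w w
      ≤ 4 * M * R / (3 * Module.finrank ℝ V * t) * shellInner φ c R w w := by
  have hR : 0 < R := by linarith [dist_nonneg (x := x) (y := c)]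
  have hM0 : 0 ≤ M := (neg_nonneg.2 (hφ.deriv_nonpos 0)).trans (hM 0)
  have hn : (0 : ℝ) < Module.finrank ℝ V := by exact_mod_cast Module.finrank_pos
  have hsq : Continuous fun y => ⟪w y, w y⟫ := hw.continuous.inner hw.continuous
  calc shellInner φ x t w w ≤ 4 * M / (3 * t) * ∫ y, ballWeight φ c R y * ⟪w y, w y⟫ := by
        rw [← integral_const_mul]
        refine integral_mono (hφ.integrable_shellWeight_mul ht hsq)
          ((hφ.integrable_ballWeight_mul hR hsq).const_mul _) fun y => ?_
        simpa only [mul_assoc] using mul_le_mul_of_nonneg_right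
          (hφ.shellWeight_le_mul_ballWeight hM ht h y) (real_inner_self_nonneg (x := w y))
    _ = 4 * M / (3 * Module.finrank ℝ V * t)
          * (Module.finrank ℝ V * ∫ y, ballWeight φ c R y * ⟪w y, w y⟫) := by field_simp
    _ ≤ 4 * M / (3 * Module.finrank ℝ V * t) * (R * smoothedHeight φ w c R) :=
        mul_le_mul_of_nonneg_left (hφ.finrank_mul_integral_ballWeight_le hR hw hΔ) (by positivity)
    _ = _ := by rw [smoothedHeight]; ring

lemma antitoneOn_rpow_mul_smoothedHeight (hs : 0 < s) (hu : ContDiff ℝ 2 u)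
    (hΔ : ∀ y ∈ ball x t, Δ u y = 0) (hH : ∀ τ ∈ Set.Icc s t, 0 < smoothedHeight φ u x τ)
    (hN : ∀ τ ∈ Set.Icc s t, smoothedFrequency φ u x τ ≤ Λ) :
    AntitoneOn (fun τ => τ ^ (-(Module.finrank ℝ V - 1 + 2 * Λ)) * smoothedHeight φ u x τ)
      (Set.Icc s t) := by
  set p : ℝ := Module.finrank ℝ V - 1 + 2 * Λ with hp
  have hderiv : ∀ τ ∈ Set.Icc s t, HasDerivAt (fun τ => τ ^ (-p) * smoothedHeight φ u x τ)
      (τ ^ (-p - 1) * (2 * (smoothedFrequency φ u x τ - Λ) * smoothedHeight φ u x τ)) τ := by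
    intro τ hτ
    have hτ0 : 0 < τ := hs.trans_le hτ.1
    refine ((Real.hasDerivAt_rpow_const (.inl hτ0.ne')).mul (hφ.hasDerivAt_smoothedHeight hτ0 hu
      fun y hy => hΔ y (ball_subset_ball hτ.2 hy))).congr_deriv ?_
    have hHτ := (hH τ hτ).ne'
    rw [Real.rpow_sub_one hτ0.ne', smoothedFrequency, hp]
    field_simp
    ring
  refine antitoneOn_of_deriv_nonpos (convex_Icc s t)
    (fun τ hτ => (hderiv τ hτ).continuousAt.continuousWithinAt)
    (fun τ hτ => (hderiv τ (interior_subset hτ)).differentiableAt.differentiableWithinAt)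
    fun τ hτ => ?_
  have hτ' := interior_subset hτ
  rw [(hderiv τ hτ').deriv]
  have hτ0 : 0 < τ := hs.trans_le hτ'.1
  exact mul_nonpos_of_nonneg_of_nonpos (by positivity) (mul_nonpos_of_nonpos_of_nonneg
    (by linarith [hN τ hτ']) (hH τ hτ').le)

lemma smoothedHeight_le_div_rpow_mul (hs : 0 < s) (hst : s ≤ t) (hu : ContDiff ℝ 2 u)
    (hΔ : ∀ y ∈ ball x t, Δ u y = 0) (hH : ∀ τ ∈ Set.Icc s t, 0 < smoothedHeight φ u x τ)
    (hN : ∀ τ ∈ Set.Icc s t, smoothedFrequency φ u x τ ≤ Λ) : smoothedHeight φ u x t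
      ≤ (t / s) ^ (Module.finrank ℝ V - 1 + 2 * Λ) * smoothedHeight φ u x s := by
  have ht : 0 < t := hs.trans_le hst
  have h := hφ.antitoneOn_rpow_mul_smoothedHeight hs hu hΔ hH hN (Set.left_mem_Icc.2 hst)
    (Set.right_mem_Icc.2 hst) hst
  simp only [Real.rpow_neg ht.le, Real.rpow_neg hs.le, inv_mul_eq_div] at h
  rw [Real.div_rpow ht.le hs.le, div_mul_eq_mul_div, mul_div_assoc]
  rwa [div_le_iff₀' (by positivity)] at h

section RadialMonotonicity

variable (hs : 0 < s) (hu : ContDiff ℝ 2 u) (hΔ : ∀ y ∈ ball x t, Δ u y = 0)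
  (hH : ∀ τ ∈ Set.Icc s t, 0 < smoothedHeight φ u x τ)
include hs hu hΔ hH

lemma hasDerivAt_smoothedFrequency_of_mem_Icc {τ : ℝ} (hτ : τ ∈ Set.Icc s t) :
    HasDerivAt (smoothedFrequency φ u x) (2 / (τ * smoothedHeight φ u x τ) *
      shellInner φ x τ (homogeneityDefect x (smoothedFrequency φ u x τ) u)
        (homogeneityDefect x (smoothedFrequency φ u x τ) u)) τ :=
  hφ.hasDerivAt_smoothedFrequency (hs.trans_le hτ.1) hu
    (fun y hy => hΔ y (ball_subset_ball hτ.2 hy)) (hH τ hτ).ne'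

lemma monotoneOn_smoothedFrequency : MonotoneOn (smoothedFrequency φ u x) (Set.Icc s t) := by
  have hderiv := fun τ => hφ.hasDerivAt_smoothedFrequency_of_mem_Icc hs hu hΔ hH (τ := τ)
  refine monotoneOn_of_deriv_nonneg (convex_Icc s t)
    (fun τ hτ => (hderiv τ hτ).continuousAt.continuousWithinAt)
    (fun τ hτ => (hderiv τ (interior_subset hτ)).differentiableAt.differentiableWithinAt)
    fun τ hτ => ?_
  have hτ' := interior_subset hτ
  rw [(hderiv τ hτ').deriv]
  have hτ0 : 0 < τ := hs.trans_le hτ'.1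
  have := hH τ hτ'
  exact mul_nonneg (by positivity) (hφ.shellInner_self_nonneg x τ _)

lemma exists_shellInner_homogeneityDefect_le_sub (hst : s < t) : ∃ τ ∈ Set.Ioo s t,
    shellInner φ x τ (homogeneityDefect x (smoothedFrequency φ u x τ) u)
        (homogeneityDefect x (smoothedFrequency φ u x τ) u)
      ≤ t / (2 * (t - s)) * smoothedHeight φ u x τ
        * (smoothedFrequency φ u x t - smoothedFrequency φ u x s) := by
  have hderiv := fun τ => hφ.hasDerivAt_smoothedFrequency_of_mem_Icc hs hu hΔ hH (τ := τ)
  obtain ⟨τ, hτ, slope⟩ := exists_hasDerivAt_eq_slope _ _ hst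
    (fun τ hτ => (hderiv τ hτ).continuousAt.continuousWithinAt)
    fun τ hτ => hderiv τ (Set.Ioo_subset_Icc_self hτ)
  have hτ0 := hs.trans hτ.1
  have hHτ := hH τ (Set.Ioo_subset_Icc_self hτ)
  have hsub : 0 < t - s := sub_pos.2 hst
  have hmono : 0 ≤ smoothedFrequency φ u x t - smoothedFrequency φ u x s :=
    sub_nonneg.2 (hφ.monotoneOn_smoothedFrequency hs hu hΔ hH (Set.left_mem_Icc.2 hst.le)
      (Set.right_mem_Icc.2 hst.le) hst.le)
  refine ⟨τ, hτ, ?_⟩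
  calc _ = τ * smoothedHeight φ u x τ / 2
        * ((smoothedFrequency φ u x t - smoothedFrequency φ u x s) / (t - s)) := by
        rw [← slope]
        field_simp
    _ ≤ t * smoothedHeight φ u x τ / 2
        * ((smoothedFrequency φ u x t - smoothedFrequency φ u x s) / (t - s)) := by
        gcongr
        exact hτ.2.le
    _ = _ := by field_simp

end RadialMonotonicity

lemma abs_shellInner_homogeneityDefect_fderiv_le (hr : 0 < r) (hs : s ∈ Set.Icc (0 : ℝ) 1)
    (hu : ContDiff ℝ 2 u) (hx : x = x₁ + s • (x₂ - x₁)) (hΔ : ∀ y ∈ ball x r, Δ u y = 0)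
    (hH : smoothedHeight φ u x r ≠ 0) (a₁ a₂ : ℝ) :
    |shellInner φ x r (homogeneityDefect x (smoothedFrequency φ u x r) u)
        fun y => fderiv ℝ u y (x₂ - x₁)|
      ≤ 3 / 2 * (shellInner φ x r (homogeneityDefect x₁ a₁ u) (homogeneityDefect x₁ a₁ u)
        + shellInner φ x r (homogeneityDefect x₂ a₂ u) (homogeneityDefect x₂ a₂ u)) := by
  have hdefect (z : V) (a : ℝ) : Continuous (homogeneityDefect z a u) :=
    (contDiff_homogeneityDefect (hu.of_le one_le_two) (zero_add 1).le z a).continuous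
  set q := homogeneityDefect x (smoothedFrequency φ u x r) u
  set w₁ := homogeneityDefect x₁ a₁ u
  set w₂ := homogeneityDefect x₂ a₂ u
  have hw : Continuous (w₁ - w₂) := (hdefect x₁ a₁).sub (hdefect x₂ a₂)
  have orthogonal : shellInner φ x r q (fun y => fderiv ℝ u y (x₂ - x₁))
      = shellInner φ x r q (w₁ - w₂) := by
    rw [fderiv_apply_sub_eq_homogeneityDefect_sub u x₁ x₂ a₁ a₂, shellInner_comm,
      hφ.shellInner_sub_left hr hw (hu.continuous.const_smul _) (hdefect x _),
      shellInner_smul_left, shellInner_comm φ x r u,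
      hφ.shellInner_homogeneityDefect_smoothedFrequency_left hr hu hΔ hH, mul_zero, sub_zero,
      shellInner_comm]
  have least_squares : shellInner φ x r q q
      ≤ ((1 - s) ^ 2 + s ^ 2) * (shellInner φ x r w₁ w₁ + shellInner φ x r w₂ w₂) := by
    refine (hφ.shellInner_homogeneityDefect_smoothedFrequency_le hr hu hΔ hH
      ((1 - s) * a₁ + s * a₂)).trans ?_
    rw [hx, homogeneityDefect_convexCombination]
    exact hφ.shellInner_smul_add_smul_self_le hr (hdefect x₁ a₁) (hdefect x₂ a₂) (1 - s) s
  have difference : shellInner φ x r (w₁ - w₂) (w₁ - w₂)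
      ≤ 2 * (shellInner φ x r w₁ w₁ + shellInner φ x r w₂ w₂) := by
    have := hφ.shellInner_smul_add_smul_self_le (x := x) hr (hdefect x₁ a₁) (hdefect x₂ a₂) 1 (-1)
    simp only [one_smul, neg_smul, ← sub_eq_add_neg] at this
    linarith
  have convex : (1 - s) ^ 2 + s ^ 2 ≤ 1 := by nlinarith [hs.1, hs.2]
  have hsum := add_nonneg (hφ.shellInner_self_nonneg x r w₁) (hφ.shellInner_self_nonneg x r w₂)
  rw [orthogonal]
  linarith [hφ.abs_shellInner_le (x := x) hr (hdefect x (smoothedFrequency φ u x r)) hw,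
    mul_le_mul_of_nonneg_right convex hsum]

lemma smoothedHeight_half_le_of_dist_le [Nontrivial V] (hM : ∀ s, -deriv φ s ≤ M) (hr : 0 < r)
    (hx : dist x c ≤ r / 4) (hu : ContDiff ℝ 2 u) (hΔ : ∀ y ∈ ball x r, Δ u y = 0) :
    smoothedHeight φ u c (r / 2)
      ≤ 8 * M / (3 * Module.finrank ℝ V) * smoothedHeight φ u x r := by
  refine (hφ.shellInner_self_le_of_dist_add_le hM (half_pos hr)
    (by rw [dist_comm]; linarith) hu hΔ).trans_eq ?_
  rw [smoothedHeight]
  field_simp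
  ring

lemma shellInner_self_le_of_dist_le [Nontrivial V] (hM : ∀ s, -deriv φ s ≤ M) (hr : 0 < r)
    (hx : dist x c ≤ r / 4) (ht : t ∈ Set.Icc (2 * r) (4 * r)) {w : V → F} (hw : ContDiff ℝ 2 w)
    (hΔ : ∀ y ∈ ball c t, Δ w y = 0) :
    shellInner φ x r w w ≤ 16 * M / (3 * Module.finrank ℝ V) * shellInner φ c t w w := by
  have hM0 : 0 ≤ M := (neg_nonneg.2 (hφ.deriv_nonpos 0)).trans (hM 0)
  have hn : (0 : ℝ) < Module.finrank ℝ V := by exact_mod_cast Module.finrank_pos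
  refine (hφ.shellInner_self_le_of_dist_add_le hM hr (by linarith [ht.1]) hw hΔ).trans
    (mul_le_mul_of_nonneg_right ?_ (hφ.shellInner_self_nonneg c t w))
  rw [div_le_div_iff₀ (by positivity) (by positivity)]
  nlinarith [ht.2, mul_nonneg hM0 hn.le]

section OneCentre

variable [Nontrivial V] (hM : ∀ s, -deriv φ s ≤ M) (hr : 0 < r) (hx : dist x c ≤ r / 4)
  (hΔ : ∀ y ∈ ball c (4 * r), Δ u y = 0)
  (hH : ∀ t ∈ Set.Icc (r / 4) (4 * r), 0 < smoothedHeight φ u c t)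
include hM hr hx hΔ hH

lemma smoothedHeight_pos_of_dist_le (hu : ContDiff ℝ 2 u) : 0 < smoothedHeight φ u x r := by
  have half := hφ.smoothedHeight_half_le_of_dist_le hM hr hx hu fun y hy =>
    hΔ y (ball_subset_ball' (by linarith) hy)
  have hM0 : 0 ≤ M := (neg_nonneg.2 (hφ.deriv_nonpos 0)).trans (hM 0)
  exact pos_of_mul_pos_right ((hH (r / 2) ⟨by linarith, by linarith⟩).trans_le half)
    (by positivity)

lemma smoothedHeight_le_mul_of_dist_le (hu : ContDiff ℝ 2 u)
    (hN : smoothedFrequency φ u c (4 * r) ≤ Λ) (ht : t ∈ Set.Icc (r / 2) (4 * r)) :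
    smoothedHeight φ u c t ≤ 8 ^ (Module.finrank ℝ V - 1 + 2 * Λ)
      * (8 * M / (3 * Module.finrank ℝ V)) * smoothedHeight φ u x r := by
  have ht0 : 0 < t := by linarith [ht.1]
  have exponent_nonneg : 0 ≤ Module.finrank ℝ V - 1 + 2 * Λ := by
    have hn : (1 : ℝ) ≤ Module.finrank ℝ V := by exact_mod_cast Module.finrank_pos
    linarith [hφ.smoothedFrequency_nonneg u c (t := 4 * r) (by positivity)]
  have hmem {τ : ℝ} (hτ : τ ∈ Set.Icc (r / 2) t) : τ ∈ Set.Icc (r / 4) (4 * r) :=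
    ⟨by linarith [hτ.1], hτ.2.trans ht.2⟩
  have frequency_le : ∀ τ ∈ Set.Icc (r / 2) t, smoothedFrequency φ u c τ ≤ Λ := fun τ hτ =>
    (hφ.monotoneOn_smoothedFrequency (by positivity) hu hΔ hH (hmem hτ)
      (Set.right_mem_Icc.2 (by linarith)) (hmem hτ).2).trans hN
  calc smoothedHeight φ u c t
      ≤ (t / (r / 2)) ^ (Module.finrank ℝ V - 1 + 2 * Λ) * smoothedHeight φ u c (r / 2) :=
        hφ.smoothedHeight_le_div_rpow_mul (half_pos hr) ht.1 hu
          (fun y hy => hΔ y (ball_subset_ball ht.2 hy)) (fun τ hτ => hH τ (hmem hτ)) frequency_le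
    _ ≤ 8 ^ (Module.finrank ℝ V - 1 + 2 * Λ)
          * (8 * M / (3 * Module.finrank ℝ V) * smoothedHeight φ u x r) := by
        refine mul_le_mul (Real.rpow_le_rpow (by positivity) ?_ exponent_nonneg)
          (hφ.smoothedHeight_half_le_of_dist_le hM hr hx hu fun y hy =>
            hΔ y (ball_subset_ball' (by linarith) hy))
          (hH (r / 2) ⟨by linarith, by linarith⟩).le (by positivity)
        rw [div_le_iff₀ (half_pos hr)]
        linarith [ht.2]
    _ = _ := by ring

omit hx

lemma exists_shellInner_homogeneityDefect_le (hu : ContDiff ℝ 3 u)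
    (hN : smoothedFrequency φ u c (4 * r) ≤ Λ) : ∃ a, ∀ x, dist x c ≤ r / 4 →
      shellInner φ x r (homogeneityDefect c a u) (homogeneityDefect c a u)
        ≤ pinchingConst (Module.finrank ℝ V) M Λ * smoothedHeight φ u x r
          * (smoothedFrequency φ u c (4 * r) - smoothedFrequency φ u c (r / 4)) := by
  have hu2 : ContDiff ℝ 2 u := hu.of_le (by norm_num)
  have hM0 : 0 ≤ M := (neg_nonneg.2 (hφ.deriv_nonpos 0)).trans (hM 0)
  obtain ⟨τ, hτ, defect_le⟩ := hφ.exists_shellInner_homogeneityDefect_le_sub (s := 2 * r)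
    (by positivity) hu2 hΔ (fun t ht => hH t ⟨by linarith [ht.1], ht.2⟩) (by linarith)
  have hτ0 : 0 < τ := by linarith [hτ.1]
  have hle : smoothedFrequency φ u c (r / 4) ≤ smoothedFrequency φ u c (2 * r) :=
    hφ.monotoneOn_smoothedFrequency (by positivity) hu2 hΔ hH ⟨le_rfl, by linarith⟩
      ⟨by linarith, by linarith⟩ (by linarith)
  have hle' : smoothedFrequency φ u c (2 * r) ≤ smoothedFrequency φ u c (4 * r) :=
    hφ.monotoneOn_smoothedFrequency (by positivity) hu2 hΔ hH ⟨by linarith, by linarith⟩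
      ⟨by linarith, le_rfl⟩ (by linarith)
  refine ⟨smoothedFrequency φ u c τ, fun x hx => ?_⟩
  set w := homogeneityDefect c (smoothedFrequency φ u c τ) u
  have height_le := hφ.smoothedHeight_le_mul_of_dist_le hM hr hx hΔ hH hu2 hN
    (t := τ) ⟨by linarith [hτ.1], hτ.2.le⟩
  calc shellInner φ x r w w
      ≤ 16 * M / (3 * Module.finrank ℝ V) * shellInner φ c τ w w :=
        hφ.shellInner_self_le_of_dist_le hM hr hx ⟨hτ.1.le, hτ.2.le⟩
          (contDiff_homogeneityDefect hu (by norm_num) c _) fun y hy =>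
            laplacian_homogeneityDefect_eq_zero hu isOpen_ball hΔ c _
              (ball_subset_ball hτ.2.le hy)
    _ ≤ 16 * M / (3 * Module.finrank ℝ V) * (8 ^ (Module.finrank ℝ V - 1 + 2 * Λ)
          * (8 * M / (3 * Module.finrank ℝ V)) * smoothedHeight φ u x r
          * (smoothedFrequency φ u c (4 * r) - smoothedFrequency φ u c (r / 4))) := by
        gcongr
        refine defect_le.trans ?_
        have : 4 * r / (2 * (4 * r - 2 * r)) = 1 := by field_simp; ring
        rw [this, one_mul]
        exact mul_le_mul height_le (by linarith) (by linarith)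
          ((hH τ ⟨by linarith [hτ.1], hτ.2.le⟩).le.trans height_le)
    _ = _ := by rw [pinchingConst]; ring

end OneCentre

lemma abs_smoothedFrequency_sub_le_of_contDiff [Nontrivial V] (hM : ∀ s, -deriv φ s ≤ M)
    (hr : 0 < r) (hdist : dist x₁ x₂ ≤ r / 4) (hu : ContDiff ℝ 3 u)
    (hΔ₁ : ∀ y ∈ ball x₁ (4 * r), Δ u y = 0) (hΔ₂ : ∀ y ∈ ball x₂ (4 * r), Δ u y = 0)
    (hH₁ : ∀ t ∈ Set.Icc (r / 4) (4 * r), 0 < smoothedHeight φ u x₁ t)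
    (hH₂ : ∀ t ∈ Set.Icc (r / 4) (4 * r), 0 < smoothedHeight φ u x₂ t)
    (hN₁ : smoothedFrequency φ u x₁ (4 * r) ≤ Λ) (hN₂ : smoothedFrequency φ u x₂ (4 * r) ≤ Λ) :
    |smoothedFrequency φ u x₁ r - smoothedFrequency φ u x₂ r|
      ≤ 3 * pinchingConst (Module.finrank ℝ V) M Λ
        * ((smoothedFrequency φ u x₁ (4 * r) - smoothedFrequency φ u x₁ (r / 4))
          + (smoothedFrequency φ u x₂ (4 * r) - smoothedFrequency φ u x₂ (r / 4))) := by
  have hu2 : ContDiff ℝ 2 u := hu.of_le (by norm_num)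
  obtain ⟨a₁, defect₁⟩ := hφ.exists_shellInner_homogeneityDefect_le hM hr hΔ₁ hH₁ hu hN₁
  obtain ⟨a₂, defect₂⟩ := hφ.exists_shellInner_homogeneityDefect_le hM hr hΔ₂ hH₂ hu hN₂
  have near {s : ℝ} (hs : s ∈ Set.Icc (0 : ℝ) 1) : dist (x₁ + s • (x₂ - x₁)) x₁ ≤ r / 4 ∧
      dist (x₁ + s • (x₂ - x₁)) x₂ ≤ r / 4 := by
    have hmem : x₁ + s • (x₂ - x₁) ∈ segment ℝ x₁ x₂ := segment_eq_image' ℝ x₁ x₂ ▸ ⟨s, hs, rfl⟩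
    have hball (z : V) (h₁ : dist x₁ z ≤ r / 4) (h₂ : dist x₂ z ≤ r / 4) :=
      (convex_closedBall z (r / 4)).segment_subset (mem_closedBall.2 h₁) (mem_closedBall.2 h₂) hmem
    have hr4 : 0 ≤ r / 4 := by positivity
    exact ⟨hball x₁ (by simpa) (by rwa [dist_comm]), hball x₂ hdist (by simpa)⟩
  have harmonic {s : ℝ} (hs : s ∈ Set.Icc (0 : ℝ) 1) :
      ∀ y ∈ ball (x₁ + s • (x₂ - x₁)) r, Δ u y = 0 := fun y hy =>
    hΔ₁ y (ball_subset_ball' (by linarith [(near hs).1]) hy)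
  have height_pos {s : ℝ} (hs : s ∈ Set.Icc (0 : ℝ) 1) :=
    hφ.smoothedHeight_pos_of_dist_le hM hr (near hs).1 hΔ₁ hH₁ hu2
  rw [abs_sub_comm]
  refine le_of_eq_of_le (by simp) (norm_image_sub_le_of_norm_deriv_le_segment_01'
    (fun s hs => (hφ.hasDerivAt_smoothedFrequency_add_smul hr hu2 x₁ (x₂ - x₁) s (harmonic hs)
      (height_pos hs).ne').hasDerivWithinAt) fun s hs => ?_)
  have hs' := Set.Ico_subset_Icc_self hs
  have hpos := height_pos hs'
  rw [Real.norm_eq_abs, abs_mul, abs_of_pos (by positivity), div_mul_eq_mul_div, div_le_iff₀ hpos]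
  have pairing := hφ.abs_shellInner_homogeneityDefect_fderiv_le hr hs' hu2 rfl (harmonic hs')
    hpos.ne' a₁ a₂
  linarith [defect₁ _ (near hs').1, defect₂ _ (near hs').2]

end IsRadialCutoff

end Pinching

/-! ### Localisation -/

section Localisation

variable {V F : Type*} [NormedAddCommGroup V] [InnerProductSpace ℝ V] [FiniteDimensional ℝ V]
  [NormedAddCommGroup F] [InnerProductSpace ℝ F] {φ : ℝ → ℝ} {u v : V → F} {x : V} {t : ℝ}

lemma exists_contDiff_eqOn_and_laplacian_eqOn {n : ℕ∞} {s Ω : Set V} (hs : IsClosed s)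
    (hΩ : IsOpen Ω) (hsΩ : s ⊆ Ω) (hu : ContDiffOn ℝ n u Ω) :
    ∃ v : V → F, ContDiff ℝ n v ∧ Set.EqOn v u s ∧ Set.EqOn (Δ v) (Δ u) s := by
  obtain ⟨χ, χ_zero, χ_one, -⟩ := exists_contMDiffMap_zero_one_nhds_of_isClosed
    (modelWithCornersSelf ℝ V) (n := n) hΩ.isClosed_compl hs
    (Set.disjoint_compl_left_iff_subset.2 hsΩ)
  have agree {y : V} (hy : y ∈ s) : (fun y => χ y • u y) =ᶠ[nhds y] u := by
    filter_upwards [χ_one.filter_mono (nhds_le_nhdsSet hy)] with z hz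
    rw [hz, one_smul]
  refine ⟨fun y => χ y • u y, contDiff_iff_contDiffAt.2 fun y => ?_,
    fun y hy => (agree hy).eq_of_nhds,
    fun y hy => (InnerProductSpace.laplacian_congr_nhds (agree hy)).eq_of_nhds⟩
  by_cases hy : y ∈ Ω
  · exact χ.contMDiff.contDiff.contDiffAt.smul (hu.contDiffAt (hΩ.mem_nhds hy))
  · refine (contDiffAt_const (c := (0 : F))).congr_of_eventuallyEq ?_
    filter_upwards [χ_zero.filter_mono (nhds_le_nhdsSet hy)] with z hz
    rw [hz, zero_smul]

variable [MeasurableSpace V] [BorelSpace V]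

namespace IsRadialCutoff

variable (hφ : IsRadialCutoff φ) (ht : 0 < t) (huv : Set.EqOn u v (ball x t))
include hφ ht huv

lemma smoothedHeight_congr : smoothedHeight φ u x t = smoothedHeight φ v x t := by
  refine integral_congr_ae (.of_forall fun y => ?_)
  by_cases hy : shellWeight φ x t y = 0
  · simp [hy]
  · simp [huv (hφ.mem_ball_of_shellWeight_ne_zero ht hy)]

lemma smoothedEnergy_congr : smoothedEnergy φ u x t = smoothedEnergy φ v x t := by
  refine integral_congr_ae (.of_forall fun y => ?_)
  by_cases hy : ballWeight φ x t y = 0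
  · simp [hy]
  · have hy' := isOpen_ball.mem_nhds (hφ.mem_ball_of_ballWeight_ne_zero ht hy)
    simp only [gradInner, (huv.eventuallyEq_of_mem hy').fderiv_eq]

lemma smoothedFrequency_congr : smoothedFrequency φ u x t = smoothedFrequency φ v x t := by
  rw [smoothedFrequency, smoothedFrequency, hφ.smoothedHeight_congr ht huv,
    hφ.smoothedEnergy_congr ht huv]

end IsRadialCutoff

end Localisation

/-! ### The pinching estimate -/

section General

variable {V : Type*} [NormedAddCommGroup V] [InnerProductSpace ℝ V] [FiniteDimensional ℝ V]
  [MeasurableSpace V] [BorelSpace V]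

theorem stmt_19_general [Nontrivial V] {φ : ℝ → ℝ} (hφ : IsRadialCutoff φ) (Λ : ℝ) :
    ∃ C > (0 : ℝ), ∀ {F : Type*} [NormedAddCommGroup F] [InnerProductSpace ℝ F]
      {u : V → F} {Ω : Set V} {r : ℝ} {x₁ x₂ : V}, IsOpen Ω → ContDiffOn ℝ 3 u Ω →
      (∀ y ∈ Ω, Δ u y = 0) → 0 < r → dist x₁ x₂ ≤ r / 4 →
      (∀ c ∈ ({x₁, x₂} : Set V), closedBall c (4 * r) ⊆ Ω ∧
        (∀ t ∈ Set.Icc (r / 4) (4 * r), 0 < smoothedHeight φ u c t) ∧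
        smoothedFrequency φ u c (4 * r) ≤ Λ) →
      |smoothedFrequency φ u x₁ r - smoothedFrequency φ u x₂ r|
        ≤ C * ((smoothedFrequency φ u x₁ (4 * r) - smoothedFrequency φ u x₁ (r / 4))
          + (smoothedFrequency φ u x₂ (4 * r) - smoothedFrequency φ u x₂ (r / 4))) := by
  obtain ⟨M, hM0, hM⟩ := hφ.exists_neg_deriv_le
  have hn : (0 : ℝ) < Module.finrank ℝ V := by exact_mod_cast Module.finrank_pos
  refine ⟨3 * pinchingConst (Module.finrank ℝ V) M Λ, by rw [pinchingConst]; positivity, ?_⟩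
  intro F _ _ u Ω r x₁ x₂ hΩ hu hΔ hr hdist hc
  have h₁ : x₁ ∈ ({x₁, x₂} : Set V) := by simp
  have h₂ : x₂ ∈ ({x₁, x₂} : Set V) := by simp
  obtain ⟨v, hv, huv, hΔuv⟩ := exists_contDiff_eqOn_and_laplacian_eqOn (n := 3)
    (isClosed_closedBall.union isClosed_closedBall) hΩ (Set.union_subset (hc x₁ h₁).1 (hc x₂ h₂).1)
    hu
  have ball_subset {c : V} (hc' : c ∈ ({x₁, x₂} : Set V)) {t : ℝ} (ht : t ≤ 4 * r) :
      ball c t ⊆ closedBall x₁ (4 * r) ∪ closedBall x₂ (4 * r) := by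
    refine (ball_subset_closedBall.trans (closedBall_subset_closedBall ht)).trans ?_
    rcases hc' with rfl | rfl
    exacts [Set.subset_union_left, Set.subset_union_right]
  have harmonic {c : V} (hc' : c ∈ ({x₁, x₂} : Set V)) : ∀ y ∈ ball c (4 * r), Δ v y = 0 :=
    fun y hy => (hΔuv (ball_subset hc' le_rfl hy)).trans
      (hΔ y ((hc c hc').1 (ball_subset_closedBall hy)))
  have height_pos {c : V} (hc' : c ∈ ({x₁, x₂} : Set V)) :
      ∀ t ∈ Set.Icc (r / 4) (4 * r), 0 < smoothedHeight φ v c t := fun t ht => by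
    rw [hφ.smoothedHeight_congr (by linarith [ht.1]) (huv.mono (ball_subset hc' ht.2))]
    exact (hc c hc').2.1 t ht
  have frequency {c : V} (hc' : c ∈ ({x₁, x₂} : Set V)) {t : ℝ} (ht : 0 < t) (ht' : t ≤ 4 * r) :
      smoothedFrequency φ v c t = smoothedFrequency φ u c t :=
    hφ.smoothedFrequency_congr ht (huv.mono (ball_subset hc' ht'))
  have frequency_le {c : V} (hc' : c ∈ ({x₁, x₂} : Set V)) :
      smoothedFrequency φ v c (4 * r) ≤ Λ :=
    (frequency hc' (by positivity) le_rfl).trans_le (hc c hc').2.2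
  have hr4 : r / 4 ≤ 4 * r := by linarith
  have hr1 : r ≤ 4 * r := by linarith
  simpa only [frequency h₁, frequency h₂, hr, hr1, hr4, le_rfl, div_pos, mul_pos, four_pos] using
    hφ.abs_smoothedFrequency_sub_le_of_contDiff hM hr hdist hv (harmonic h₁) (harmonic h₂)
      (height_pos h₁) (height_pos h₂) (frequency_le h₁) (frequency_le h₂)

end General

section FourSpace

variable {G : Type*} [NormedAddCommGroup G] [InnerProductSpace ℝ G]

lemma IsHarmonicOn.laplacian_eq_zero {u : E4 → G} {Ω : Set E4} (hu : IsHarmonicOn u Ω) {y : E4}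
    (hy : y ∈ Ω) : Δ u y = 0 := by
  rw [InnerProductSpace.laplacian_eq_iteratedFDeriv_orthonormalBasis u
    (EuclideanSpace.basisFun (Fin 4) ℝ)]
  simpa using hu.2 y hy

lemma Hphi_eq_smoothedHeight (φ : ℝ → ℝ) (u : E4 → G) (x : E4) (t : ℝ) :
    Hphi φ u x t = smoothedHeight φ u x t := by
  rw [Hphi, smoothedHeight, shellInner, ← integral_neg]
  refine integral_congr_ae (.of_forall fun y => ?_)
  simp only [shellWeight, real_inner_self_eq_norm_sq]
  ring

lemma Dphi_eq_smoothedEnergy (φ : ℝ → ℝ) (u : E4 → G) (x : E4) (t : ℝ) :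
    Dphi φ u x t = smoothedEnergy φ u x t := by
  simp only [Dphi, smoothedEnergy, gradSq, ballWeight, mul_comm (φ _),
    gradInner_eq_sum (EuclideanSpace.basisFun (Fin 4) ℝ), EuclideanSpace.basisFun_apply,
    real_inner_self_eq_norm_sq]

lemma Nphi_eq_smoothedFrequency (φ : ℝ → ℝ) (u : E4 → G) (x : E4) (t : ℝ) :
    Nphi φ u x t = smoothedFrequency φ u x t := by
  rw [Nphi, smoothedFrequency, Hphi_eq_smoothedHeight, Dphi_eq_smoothedEnergy]

end FourSpace

lemma le_sqrt_mul_sqrt_of_le {a b : ℝ} (h : a ≤ b) : a ≤ √b * √a := by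
  rcases le_total a 0 with ha | ha
  · exact ha.trans (by positivity)
  · calc a = √a * √a := (Real.mul_self_sqrt ha).symm
      _ ≤ √b * √a := by gcongr

/-- Flat-case analogue of Corollary 6.3: the pointwise frequency pinching estimate.
Here `W_{r/4}^{4r}(x) = N_φ(x,4r) − N_φ(x,r/4)`. -/
theorem stmt_19 (φ : ℝ → ℝ) (hφs : ContDiff ℝ (⊤ : ℕ∞) φ) (hφa : Antitone φ)
    (hφ1 : ∀ t ≤ (3/4 : ℝ), φ t = 1) (hφ0 : ∀ t, (1:ℝ) ≤ t → φ t = 0)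
    (Λ : ℝ) (hΛ : 0 < Λ) :
    ∃ C > (0:ℝ),
      ∀ (F : Type) [NormedAddCommGroup F] [InnerProductSpace ℝ F] [FiniteDimensional ℝ F],
      ∀ (u : E4 → F) (Ω : Set E4), IsOpen Ω → IsHarmonicOn u Ω →
      ∀ (r : ℝ), 0 < r → ∀ x₁ x₂ : E4, dist x₁ x₂ ≤ r / 4 →
      closedBall x₁ (6 * r) ⊆ Ω →
      (∀ t ∈ Set.Ioc (0:ℝ) (4 * r),
        (0 < Hphi φ u x₁ t ∧ Nphi φ u x₁ t ≤ Λ) ∧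
        (0 < Hphi φ u x₂ t ∧ Nphi φ u x₂ t ≤ Λ)) →
      (∀ x' ∈ segment ℝ x₁ x₂, 0 < Hphi φ u x' r) →
      |Nphi φ u x₁ r - Nphi φ u x₂ r| ≤
        C * (Real.sqrt (Nphi φ u x₁ (4 * r) - Nphi φ u x₁ (r / 4)) +
             Real.sqrt (Nphi φ u x₂ (4 * r) - Nphi φ u x₂ (r / 4))) := by
  have hφ : IsRadialCutoff φ := ⟨hφs.of_le (by simp), hφa, hφ1, hφ0⟩
  obtain ⟨C, hC, pinching⟩ := stmt_19_general (V := E4) hφ Λ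
  refine ⟨C * √Λ, by positivity, fun F _ _ _ u Ω hΩ hu r hr x₁ x₂ hdist hball hH _ => ?_⟩
  simp only [Hphi_eq_smoothedHeight, Nphi_eq_smoothedFrequency] at hH ⊢
  have hball₁ : closedBall x₁ (4 * r) ⊆ Ω :=
    (closedBall_subset_closedBall (by linarith)).trans hball
  have hball₂ : closedBall x₂ (4 * r) ⊆ Ω :=
    (closedBall_subset_closedBall' (by rw [dist_comm]; linarith)).trans hball
  have mem {t : ℝ} (ht : t ∈ Set.Icc (r / 4) (4 * r)) : t ∈ Set.Ioc 0 (4 * r) :=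
    ⟨by linarith [ht.1], ht.2⟩
  have hr4 : 4 * r ∈ Set.Ioc 0 (4 * r) := ⟨by positivity, le_rfl⟩
  have linear_bound := pinching hΩ (hu.1.of_le (by norm_cast)) (fun _ => hu.laplacian_eq_zero) hr
    hdist <| by
    rintro c (rfl | rfl)
    exacts [⟨hball₁, fun t ht => (hH t (mem ht)).1.1, (hH _ hr4).1.2⟩,
      ⟨hball₂, fun t ht => (hH t (mem ht)).2.1, (hH _ hr4).2.2⟩]
  have pinching_le_sqrt (c : E4) (hc : smoothedFrequency φ u c (4 * r) ≤ Λ) :=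
    le_sqrt_mul_sqrt_of_le
      ((sub_le_self _ (hφ.smoothedFrequency_nonneg u c (by positivity : 0 ≤ r / 4))).trans hc)
  calc _ ≤ _ := linear_bound
    _ ≤ C * (√Λ * _ + √Λ * _) := mul_le_mul_of_nonneg_left
        (add_le_add (pinching_le_sqrt x₁ (hH _ hr4).1.2) (pinching_le_sqrt x₂ (hH _ hr4).2.2)) hC.le
    _ = _ := by ring
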